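/- arXiv:2602.07214 — 5 statements merged into one kernel-verified Lean document; each statement's English description precedes it below -/
import Mathlib

section
/- Let N ≥ 1 be an integer and s ∈ (0,1) with N > 2s. Let ρ : ℝ → ℝ be a smooth function with compact support contained in (−2,2), and let υ ∈ ℝ^N with υ ≠ 0. For μ > 0 define a[ρ](μ,υ) := ∬_{ℝ^N×ℝ^N} |ρ(|y|²) − ρ(|z|²)| · | |υ+μy|^{2s−N} − |υ+μz|^{2s−N} | / ( |z|^{N−2s} · |y−z|^{N+2s} ) dy dz. Then a[ρ](μ,υ) → 0 as μ → 0⁺. -/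
/-!
Put `g x = ρ (|x| ^ 2)`, `U x = |x| ^ (2s - N)` and `V x = U (υ + μ x)`. Being Lipschitz and
bounded, `g` is `s`-Hölder, so its increment cancels `s` of the powers of `|y - z|` in the
denominator, and the integrand is at most `C (φ y + φ z) |V y - V z| / |y - z| ^ (N + s)`. Here `φ`
is integrable with bounded support, and comparable with `|z| ^ (2s - N)` near the origin. By
symmetry the integral is at most `2C ∫ φ D V`, where `D U x = ∫ |U x - U y| / |x - y| ^ (N + s) dy`
is the density of the Gagliardo seminorm of `W^{s,1}`.

Scaling gives `D V z = μ ^ s (D U) (υ + μ z)`. Away from the origin `D U` is locally bounded, as `U`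
is locally Lipschitz there and the sum of an integrable and a bounded function. Hence
`∫ φ D V = O(μ ^ s)`.
-/

open MeasureTheory Filter
open scoped ENNReal Topology

noncomputable section

open Bornology Function Metric Module Set
open scoped NNReal

section Tonelli

variable {X : Type*} [MeasurableSpace X] {ν : Measure X} [SFinite ν]

lemma lintegral_prod_add_mul_of_symmetric {φ : X → ℝ≥0∞} {κ : X → X → ℝ≥0∞}
    (hφ : Measurable φ) (hκ : Measurable (uncurry κ)) (hsymm : ∀ x y, κ x y = κ y x) :
    ∫⁻ p : X × X, (φ p.1 + φ p.2) * κ p.1 p.2 ∂(ν.prod ν) =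
      2 * ∫⁻ x, φ x * ∫⁻ y, κ x y ∂ν ∂ν := by
  have hκ' : Measurable fun p : X × X ↦ κ p.1 p.2 := hκ
  have h_fst : ∫⁻ p : X × X, φ p.1 * κ p.1 p.2 ∂(ν.prod ν) = ∫⁻ x, φ x * ∫⁻ y, κ x y ∂ν ∂ν := by
    rw [lintegral_prod _ (by fun_prop)]
    exact lintegral_congr fun x ↦ lintegral_const_mul (φ x) hκ.of_uncurry_left
  have h_snd : ∫⁻ p : X × X, φ p.2 * κ p.1 p.2 ∂(ν.prod ν) =
      ∫⁻ p : X × X, φ p.1 * κ p.1 p.2 ∂(ν.prod ν) := by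
    rw [← lintegral_prod_swap]
    exact lintegral_congr fun p ↦ by rw [Prod.fst_swap, Prod.snd_swap, hsymm]
  simp only [add_mul]
  rw [lintegral_add_left (by fun_prop), h_snd, h_fst, two_mul]

end Tonelli

section NormedGroup

variable {E : Type*} [NormedAddCommGroup E]

lemma hasCompactSupport_comp_norm_sq [ProperSpace E] {M : Type*} [Zero M] {f : ℝ → M}
    (hf : HasCompactSupport f) : HasCompactSupport fun x : E ↦ f (‖x‖ ^ 2) := by
  rw [hasCompactSupport_iff_eventuallyEq, coclosedCompact_eq_cocompact] at hf ⊢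
  exact ((tendsto_pow_atTop two_ne_zero).comp tendsto_norm_cocompact_atTop).eventually
    (atTop_le_cocompact hf)

lemma exists_lipschitzOnWith_norm_rpow {x : E} (hx : x ≠ 0) (a : ℝ) :
    ∃ L : ℝ≥0, ∃ s ∈ 𝓝 x, LipschitzOnWith L (fun y : E ↦ ‖y‖ ^ a) s := by
  have h_smooth : ContDiffAt ℝ 1 (fun r : ℝ ↦ r ^ a) ‖x‖ :=
    Real.contDiffAt_rpow_const_of_ne (norm_ne_zero_iff.2 hx)
  obtain ⟨L, t, ht, hL⟩ := h_smooth.exists_lipschitzOnWith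
  exact ⟨L * 1, norm ⁻¹' t, continuous_norm.continuousAt ht,
    hL.comp lipschitzWith_one_norm.lipschitzOnWith (mapsTo_preimage _ _)⟩

variable {G : Type*} [SeminormedAddCommGroup G] {U : E → G}

lemma norm_increment_div_rpow_le_of_lipschitzOnWith {L : ℝ≥0} {s : Set E}
    (hU : LipschitzOnWith L U s) {x w : E} (hx : x ∈ s) (hxw : x + w ∈ s) (p : ℝ) :
    ‖U (x + w) - U x‖ / ‖w‖ ^ p ≤ L * ‖w‖ ^ (-(p - 1)) := by
  rcases eq_or_ne w 0 with rfl | hw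
  · simp only [add_zero, sub_self, norm_zero, zero_div]
    positivity
  have hw0 : 0 < ‖w‖ := norm_pos_iff.2 hw
  calc ‖U (x + w) - U x‖ / ‖w‖ ^ p ≤ L * ‖w‖ / ‖w‖ ^ p := by
        gcongr
        simpa using hU.norm_sub_le hxw hx
    _ = L * ‖w‖ ^ (-(p - 1)) := by
        rw [mul_div_assoc, neg_sub, Real.rpow_sub hw0, Real.rpow_one]

lemma norm_increment_div_rpow_le_of_norm_le_add {f : E → ℝ} {M : ℝ}
    (hU : ∀ y, ‖U y‖ ≤ ‖f y‖ + M) {r p : ℝ} (hr : 0 < r) (hp : 0 ≤ p) {w : E} (x : E)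
    (hw : r ≤ ‖w‖) :
    ‖U (x + w) - U x‖ / ‖w‖ ^ p ≤ r ^ (-p) * ‖f (x + w)‖ + (M + ‖U x‖) * ‖w‖ ^ (-p) := by
  calc ‖U (x + w) - U x‖ / ‖w‖ ^ p ≤ (‖f (x + w)‖ + M + ‖U x‖) / ‖w‖ ^ p := by
        gcongr
        exact (norm_sub_le _ _).trans (by gcongr; exact hU _)
    _ = ‖w‖ ^ (-p) * ‖f (x + w)‖ + (M + ‖U x‖) * ‖w‖ ^ (-p) := by
        rw [Real.rpow_neg (norm_nonneg w)]
        ring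
    _ ≤ r ^ (-p) * ‖f (x + w)‖ + (M + ‖U x‖) * ‖w‖ ^ (-p) := by
        have h_rpow := Real.rpow_le_rpow_of_nonpos hr hw (neg_nonpos.2 hp)
        gcongr

end NormedGroup

section NormedSpace

variable {E : Type*} [NormedAddCommGroup E] [NormedSpace ℝ E]

lemma exists_holderWith_of_contDiff_of_hasCompactSupport {F : Type*} [NormedAddCommGroup F]
    [NormedSpace ℝ F] {f : E → F} (hf : ContDiff ℝ 1 f) (hfc : HasCompactSupport f) {θ : ℝ≥0}
    (hθ : θ ≤ 1) : ∃ C, HolderWith C θ f := by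
  obtain ⟨L, hL⟩ := hf.lipschitzWith_of_hasCompactSupport hfc one_ne_zero
  have h_range : ediam (range f) ≠ ∞ := (hfc.isCompact_range hf.continuous).isBounded.ediam_ne_top
  have h_bounded : HolderWith (ediam (range f)).toNNReal 0 f := fun x y ↦ by
    simpa [h_range] using edist_le_ediam_of_mem (mem_range_self x) (mem_range_self y)
  exact ⟨_, h_bounded.of_le_of_le hL.holderWith bot_le hθ⟩

lemma eventually_forall_add_smul_of_isBounded {s : Set E} (hs : IsBounded s) {x : E}
    {p : E → Prop} (hp : ∀ᶠ y in 𝓝 x, p y) :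
    ∀ᶠ t in 𝓝 (0 : ℝ), ∀ z ∈ s, p (x + t • z) := by
  have hp0 : {w | p (x + w)} ∈ 𝓝 (0 : E) :=
    (continuous_const_add x).tendsto' 0 x (add_zero x) |>.eventually hp
  exact (absorbs_iff_eventually_nhds_zero (mem_of_mem_nhds hp0)).1
    (NormedSpace.isVonNBounded_of_isBounded ℝ hs hp0)

end NormedSpace

section Haar

variable {E : Type*} [NormedAddCommGroup E] [NormedSpace ℝ E] [FiniteDimensional ℝ E]
  [MeasurableSpace E] [BorelSpace E] (ν : Measure E) [ν.IsAddHaarMeasure]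

lemma integrableOn_ball_norm_rpow_neg [Nontrivial E] {α : ℝ} (hα : α < finrank ℝ E) (r : ℝ) :
    IntegrableOn (fun x : E ↦ ‖x‖ ^ (-α)) (ball 0 r) ν :=
  integrableOn_ball_of_norm_le_rpow (C := 1) finrank_pos hα
    (ae_of_all _ fun x ↦ by rw [one_mul, Real.norm_of_nonneg (by positivity)])
    (Measurable.aestronglyMeasurable (by fun_prop))

lemma integrableOn_compl_ball_norm_rpow_neg {β r : ℝ} (hβ : finrank ℝ E < β) (hr : 0 < r) :
    IntegrableOn (fun x : E ↦ ‖x‖ ^ (-β)) (ball 0 r)ᶜ ν := by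
  refine ((integrable_one_add_norm hβ).const_mul ((r / (1 + r)) ^ (-β))).integrableOn.mono'
    (Measurable.aestronglyMeasurable (by fun_prop))
    ((ae_restrict_iff' measurableSet_ball.compl).2 <| ae_of_all _ fun x hx ↦ ?_)
  have hxr : r ≤ ‖x‖ := by simpa using hx
  have h_le : r / (1 + r) * (1 + ‖x‖) ≤ ‖x‖ := by
    rw [div_mul_eq_mul_div, div_le_iff₀ (by positivity)]
    linarith
  have hβ0 : -β ≤ 0 := by linarith [(finrank ℝ E).cast_nonneg (α := ℝ)]
  rw [Real.norm_of_nonneg (by positivity), ← Real.mul_rpow (by positivity) (by positivity)]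
  exact Real.rpow_le_rpow_of_nonpos (by positivity) h_le hβ0

lemma lintegral_comp_smul_of_ne_zero (f : E → ℝ≥0∞) {t : ℝ} (ht : t ≠ 0) :
    ∫⁻ x, f (t • x) ∂ν = ENNReal.ofReal |(t ^ finrank ℝ E)⁻¹| * ∫⁻ x, f x ∂ν := by
  have h_map := (Homeomorph.smulOfNeZero t ht).measurableEmbedding.lintegral_map (μ := ν) f
  simp only [Homeomorph.smulOfNeZero_apply] at h_map
  rw [← h_map, ← smul_eq_mul, ← lintegral_smul_measure, ← Measure.map_addHaar_smul ν ht]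

end Haar

section GagliardoDensity

variable {E G : Type*} [NormedAddCommGroup E] [NormedSpace ℝ E] [MeasurableSpace E]
  [SeminormedAddCommGroup G]

/-- The density at `x` of the Gagliardo seminorm of `U` in `W^{σ,1}`, written in the increment `w`
so that dilating `U` becomes a change of variables in `w`. -/
def gagliardoDensity (ν : Measure E) (σ : ℝ) (U : E → G) (x : E) : ℝ≥0∞ :=
  ∫⁻ w, ENNReal.ofReal (‖U (x + w) - U x‖ / ‖w‖ ^ (finrank ℝ E + σ)) ∂ν

variable [BorelSpace E] (ν : Measure E) [ν.IsAddHaarMeasure]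

lemma lintegral_increment_eq_gagliardoDensity (σ : ℝ) (U : E → G) (x : E) :
    ∫⁻ y, ENNReal.ofReal (‖U x - U y‖ / ‖x - y‖ ^ (finrank ℝ E + σ)) ∂ν =
      gagliardoDensity ν σ U x := by
  rw [gagliardoDensity, ← lintegral_add_left_eq_self _ x]
  simp only [sub_add_cancel_left, norm_neg, norm_sub_rev]

lemma gagliardoDensity_le {σ : ℝ} (hσ : 0 ≤ finrank ℝ E + σ) {U : E → G} {x : E} {r : ℝ}
    (hr : 0 < r) {L : ℝ≥0} (hL : LipschitzOnWith L U (ball x r)) {f : E → ℝ} {M : ℝ}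
    (hU : ∀ y, ‖U y‖ ≤ ‖f y‖ + M) :
    gagliardoDensity ν σ U x ≤
      ∫⁻ w in ball 0 r, ENNReal.ofReal (L * ‖w‖ ^ (-(finrank ℝ E + σ - 1))) ∂ν +
        (∫⁻ y, ENNReal.ofReal (r ^ (-(finrank ℝ E + σ)) * ‖f y‖) ∂ν +
          ∫⁻ w in (ball 0 r)ᶜ, ENNReal.ofReal ((M + ‖U x‖) * ‖w‖ ^ (-(finrank ℝ E + σ))) ∂ν) := by
  rw [gagliardoDensity, ← lintegral_add_compl _ (measurableSet_ball (x := (0 : E)) (ε := r))]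
  set p := finrank ℝ E + σ
  have h_translate : ∫⁻ w in (ball 0 r)ᶜ, ENNReal.ofReal (r ^ (-p) * ‖f (x + w)‖) ∂ν ≤
      ∫⁻ y, ENNReal.ofReal (r ^ (-p) * ‖f y‖) ∂ν :=
    (setLIntegral_le_lintegral _ _).trans_eq
      (lintegral_add_left_eq_self (fun y ↦ ENNReal.ofReal (r ^ (-p) * ‖f y‖)) x)
  gcongr ?_ + ?_
  · refine setLIntegral_mono' measurableSet_ball fun w hw ↦ ENNReal.ofReal_le_ofReal ?_
    exact norm_increment_div_rpow_le_of_lipschitzOnWith hL (mem_ball_self hr) (by simpa using hw) p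
  · refine le_trans ?_ (add_le_add_left h_translate _)
    rw [← lintegral_add_right _ (by fun_prop)]
    refine setLIntegral_mono' measurableSet_ball.compl fun w hw ↦
      (ENNReal.ofReal_le_ofReal ?_).trans ENNReal.ofReal_add_le
    exact norm_increment_div_rpow_le_of_norm_le_add hU hr hσ x (by simpa using hw)

variable [FiniteDimensional ℝ E]

lemma gagliardoDensity_comp_add_smul (σ : ℝ) (U : E → G) (x z : E) {t : ℝ} (ht : 0 < t) :
    gagliardoDensity ν σ (fun y ↦ U (x + t • y)) z =
      ENNReal.ofReal (t ^ σ) * gagliardoDensity ν σ U (x + t • z) := by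
  set d := finrank ℝ E
  have h_integrand (w : E) :
      ENNReal.ofReal (‖U (x + t • (z + w)) - U (x + t • z)‖ / ‖w‖ ^ (d + σ)) =
        ENNReal.ofReal (t ^ (d + σ)) *
          ENNReal.ofReal (‖U (x + t • z + t • w) - U (x + t • z)‖ / ‖t • w‖ ^ (d + σ)) := by
    rw [← ENNReal.ofReal_mul (by positivity), norm_smul, Real.norm_of_nonneg ht.le,
      Real.mul_rpow ht.le (norm_nonneg w), smul_add, ← add_assoc, mul_div_assoc',
      mul_div_mul_left _ _ (by positivity)]
  rw [gagliardoDensity, lintegral_congr h_integrand, lintegral_const_mul' _ _ ENNReal.ofReal_ne_top,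
    lintegral_comp_smul_of_ne_zero ν
      (fun w ↦ ENNReal.ofReal (‖U (x + t • z + w) - U (x + t • z)‖ / ‖w‖ ^ (d + σ))) ht.ne',
    ← mul_assoc, ← ENNReal.ofReal_mul (by positivity), abs_of_nonneg (by positivity),
    Real.rpow_add ht, Real.rpow_natCast, mul_right_comm, mul_inv_cancel₀ (by positivity), one_mul]
  rfl

lemma exists_eventually_gagliardoDensity_le [Nontrivial E] {σ : ℝ} (hσ : σ ∈ Ioo (0 : ℝ) 1)
    {U : E → G} {L : ℝ≥0} {s : Set E} {x₀ : E} (hs : s ∈ 𝓝 x₀) (hL : LipschitzOnWith L U s)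
    {f : E → ℝ} (hf : Integrable f ν) {M : ℝ} (hU : ∀ y, ‖U y‖ ≤ ‖f y‖ + M) :
    ∃ K ≠ ∞, ∀ᶠ x in 𝓝 x₀, gagliardoDensity ν σ U x ≤ K := by
  obtain ⟨ε, hε, hεs⟩ := Metric.mem_nhds_iff.1 hs
  have hσ0 : 0 < σ := hσ.1
  have h_near := ((integrableOn_ball_norm_rpow_neg ν
    (by linarith [hσ.2] : finrank ℝ E + σ - 1 < finrank ℝ E) (ε / 2)).const_mul L).lintegral_lt_top
  have h_f := (hf.norm.const_mul ((ε / 2) ^ (-(finrank ℝ E + σ)))).lintegral_lt_top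
  have h_far := ((integrableOn_compl_ball_norm_rpow_neg ν
    (by linarith : finrank ℝ E < finrank ℝ E + σ) (half_pos hε)).const_mul
      (M + (‖U x₀‖ + 1))).lintegral_lt_top
  refine ⟨_, (ENNReal.add_lt_top.2 ⟨h_near, ENNReal.add_lt_top.2 ⟨h_f, h_far⟩⟩).ne, ?_⟩
  have h_bdd : ∀ᶠ x in 𝓝 x₀, ‖U x‖ ≤ ‖U x₀‖ + 1 :=
    (hL.continuousOn.continuousAt hs).norm.eventually_le_const (lt_add_one _)
  filter_upwards [ball_mem_nhds x₀ (half_pos hε), h_bdd] with x hx hUx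
  have h_ball : ball x (ε / 2) ⊆ s :=
    (ball_subset_ball' (by linarith [mem_ball.1 hx])).trans hεs
  refine (gagliardoDensity_le ν (by positivity) (half_pos hε) (hL.mono h_ball) hU).trans ?_
  gcongr

lemma exists_eventually_gagliardoDensity_norm_rpow_neg_le [Nontrivial E] {σ α : ℝ}
    (hσ : σ ∈ Ioo (0 : ℝ) 1) (hα0 : 0 ≤ α) (hα : α < finrank ℝ E) {x₀ : E} (hx₀ : x₀ ≠ 0) :
    ∃ K ≠ ∞, ∀ᶠ x in 𝓝 x₀, gagliardoDensity ν σ (fun y : E ↦ ‖y‖ ^ (-α)) x ≤ K := by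
  obtain ⟨L, s, hs, hL⟩ := exists_lipschitzOnWith_norm_rpow hx₀ (-α)
  refine exists_eventually_gagliardoDensity_le ν hσ hs hL
    ((integrable_indicator_iff measurableSet_ball).2 (integrableOn_ball_norm_rpow_neg ν hα 1))
    (M := 1) fun y ↦ ?_
  by_cases hy : y ∈ ball 0 1
  · rw [indicator_of_mem hy]
    exact le_add_of_nonneg_right zero_le_one
  · have hy1 : 1 ≤ ‖y‖ := by simpa using hy
    rw [indicator_of_notMem hy, norm_zero, zero_add, Real.norm_of_nonneg (by positivity)]
    exact Real.rpow_le_one_of_one_le_of_nonpos hy1 (neg_nonpos.2 hα0)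

lemma tendsto_lintegral_mul_gagliardoDensity_comp_add_smul {σ : ℝ} (hσ : 0 < σ) {U : E → G}
    {x : E} {K : ℝ≥0∞} (hK : K ≠ ∞) (hUK : ∀ᶠ y in 𝓝 x, gagliardoDensity ν σ U y ≤ K)
    {φ : E → ℝ≥0∞} (hφ : Measurable φ) (hφν : ∫⁻ z, φ z ∂ν ≠ ∞) (hφs : IsBounded (support φ)) :
    Tendsto (fun t : ℝ ↦ ∫⁻ z, φ z * gagliardoDensity ν σ (fun y ↦ U (x + t • y)) z ∂ν)
      (𝓝[>] 0) (𝓝 0) := by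
  have h_lim : Tendsto (fun t : ℝ ↦ (∫⁻ z, φ z ∂ν) * (ENNReal.ofReal (t ^ σ) * K))
      (𝓝[>] 0) (𝓝 0) := by
    have h_rpow : Tendsto (fun t : ℝ ↦ t ^ σ) (𝓝[>] 0) (𝓝 0) :=
      ((Real.continuous_rpow_const hσ.le).tendsto' 0 0 (Real.zero_rpow hσ.ne')).mono_left
        nhdsWithin_le_nhds
    simpa using ENNReal.Tendsto.const_mul
      (ENNReal.Tendsto.mul_const (ENNReal.tendsto_ofReal h_rpow) (.inr hK)) (.inr hφν)
  refine tendsto_of_tendsto_of_tendsto_of_le_of_le' tendsto_const_nhds h_lim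
    (.of_forall fun _ ↦ zero_le) ?_
  filter_upwards [self_mem_nhdsWithin,
    (eventually_forall_add_smul_of_isBounded hφs hUK).filter_mono nhdsWithin_le_nhds] with t ht htK
  rw [← lintegral_mul_const _ hφ]
  refine lintegral_mono fun z ↦ ?_
  by_cases hz : φ z = 0
  · simp only [hz, zero_mul, le_refl]
  · rw [gagliardoDensity_comp_add_smul ν σ U x z ht]
    gcongr
    exact htK z hz

end GagliardoDensity

section CutoffWeight

variable {E : Type*} [NormedAddCommGroup E]

/-- The weight `‖x‖ ^ (-γ)`, increased by `1` and cut off outside the ball of radius `R`. The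
increase lets `cutoffWeight R γ y` dominate `‖z‖ ^ (-γ)` when only `y` lies in the ball, so that
`cutoffWeight R γ y + cutoffWeight R γ z` is a bound which is symmetric in `y` and `z`. -/
def cutoffWeight (R γ : ℝ) : E → ℝ≥0∞ :=
  indicator (ball 0 R) fun x ↦ ENNReal.ofReal (1 + ‖x‖ ^ (-γ))

lemma support_cutoffWeight_subset (R γ : ℝ) : support (cutoffWeight R γ : E → ℝ≥0∞) ⊆ ball 0 R :=
  support_indicator_subset

lemma ofReal_norm_rpow_neg_le_cutoffWeight_add {R γ : ℝ} (hR : 1 ≤ R) (hγ : 0 ≤ γ) {y z : E}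
    (hyz : y ∈ ball 0 R ∨ z ∈ ball 0 R) :
    ENNReal.ofReal (‖z‖ ^ (-γ)) ≤ cutoffWeight R γ y + cutoffWeight R γ z := by
  by_cases hz : z ∈ ball 0 R
  · refine le_add_left ?_
    rw [cutoffWeight, indicator_of_mem hz]
    exact ENNReal.ofReal_le_ofReal (le_add_of_nonneg_left zero_le_one)
  · have hz1 : 1 ≤ ‖z‖ := hR.trans (by simpa using hz)
    refine le_add_right ?_
    rw [cutoffWeight, indicator_of_mem (hyz.resolve_right hz)]
    refine ENNReal.ofReal_le_ofReal ?_
    exact (Real.rpow_le_one_of_one_le_of_nonpos hz1 (neg_nonpos.2 hγ)).trans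
      (le_add_of_nonneg_right (by positivity))

lemma ofReal_norm_sub_mul_div_le_cutoffWeight {F : Type*} [SeminormedAddCommGroup F] {g : E → F}
    {C θ : ℝ≥0} (hg : HolderWith C θ g) {R γ : ℝ} (hR : 1 ≤ R) (hγ : 0 ≤ γ)
    (hgR : support g ⊆ ball 0 R) (y z : E) {b : ℝ} (hb : 0 ≤ b) (β : ℝ) :
    ENNReal.ofReal (‖g y - g z‖ * b / (‖z‖ ^ γ * ‖y - z‖ ^ β)) ≤
      C * ((cutoffWeight R γ y + cutoffWeight R γ z) *
        ENNReal.ofReal (b / ‖y - z‖ ^ (β - θ))) := by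
  rcases eq_or_ne (g y) (g z) with hgyz | hgyz
  · simp only [hgyz, sub_self, norm_zero, zero_mul, zero_div, ENNReal.ofReal_zero, zero_le]
  have hyz : y ∈ ball 0 R ∨ z ∈ ball 0 R := by
    by_contra! h
    exact hgyz ((notMem_support.1 fun hy ↦ h.1 (hgR hy)).trans
      (notMem_support.1 fun hz ↦ h.2 (hgR hz)).symm)
  have hd : 0 < ‖y - z‖ := norm_pos_iff.2 (sub_ne_zero.2 fun h ↦ hgyz (congrArg g h))
  have hg_le : ‖g y - g z‖ ≤ C * ‖y - z‖ ^ (θ : ℝ) := by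
    simpa only [dist_eq_norm] using hg.dist_le y z
  have h_real : ‖g y - g z‖ * b / (‖z‖ ^ γ * ‖y - z‖ ^ β) ≤
      C * (‖z‖ ^ (-γ) * (b / ‖y - z‖ ^ (β - θ))) := by
    calc ‖g y - g z‖ * b / (‖z‖ ^ γ * ‖y - z‖ ^ β)
        ≤ C * ‖y - z‖ ^ (θ : ℝ) * b / (‖z‖ ^ γ * ‖y - z‖ ^ β) := by gcongr
      _ = C * (‖z‖ ^ (-γ) * (b / ‖y - z‖ ^ (β - θ))) := by
        rw [Real.rpow_neg (norm_nonneg z), Real.rpow_sub hd]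
        field_simp
  refine (ENNReal.ofReal_le_ofReal h_real).trans ?_
  rw [ENNReal.ofReal_mul C.coe_nonneg, ENNReal.ofReal_coe_nnreal,
    ENNReal.ofReal_mul (by positivity)]
  gcongr
  exact ofReal_norm_rpow_neg_le_cutoffWeight_add hR hγ hyz

variable [MeasurableSpace E] [BorelSpace E]

lemma measurable_cutoffWeight (R γ : ℝ) : Measurable (cutoffWeight R γ : E → ℝ≥0∞) :=
  Measurable.indicator (by fun_prop) measurableSet_ball

lemma lintegral_cutoffWeight_ne_top [NormedSpace ℝ E] [FiniteDimensional ℝ E] [Nontrivial E]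
    (ν : Measure E) [ν.IsAddHaarMeasure] (R : ℝ) {γ : ℝ} (hγ : γ < finrank ℝ E) :
    ∫⁻ x, cutoffWeight R γ x ∂ν ≠ ∞ := by
  simp only [cutoffWeight]
  rw [lintegral_indicator measurableSet_ball]
  have h_one : IntegrableOn (fun _ : E ↦ (1 : ℝ)) (ball 0 R) ν :=
    integrableOn_const measure_ball_lt_top.ne
  exact (h_one.add (integrableOn_ball_norm_rpow_neg ν hγ R)).lintegral_lt_top.ne

end CutoffWeight

section ProductOfIncrements

variable {E : Type*} [NormedAddCommGroup E] [NormedSpace ℝ E] [FiniteDimensional ℝ E]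
  [MeasurableSpace E] [BorelSpace E] (ν : Measure E) [ν.IsAddHaarMeasure]

lemma lintegral_norm_sub_mul_norm_sub_div_le {F G : Type*} [SeminormedAddCommGroup F]
    [SeminormedAddCommGroup G] {g : E → F} {C θ : ℝ≥0} (hg : HolderWith C θ g) {R γ : ℝ}
    (hR : 1 ≤ R) (hγ : 0 ≤ γ) (hgR : support g ⊆ ball 0 R) {V : E → G} (hV : StronglyMeasurable V)
    (σ : ℝ) :
    ∫⁻ p : E × E, ENNReal.ofReal (‖g p.1 - g p.2‖ * ‖V p.1 - V p.2‖ /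
        (‖p.2‖ ^ γ * ‖p.1 - p.2‖ ^ (finrank ℝ E + θ + σ))) ∂(ν.prod ν) ≤
      C * (2 * ∫⁻ z, cutoffWeight R γ z * gagliardoDensity ν σ V z ∂ν) := by
  let κ (y z : E) : ℝ≥0∞ := ENNReal.ofReal (‖V y - V z‖ / ‖y - z‖ ^ (finrank ℝ E + σ))
  have hκ : Measurable (uncurry κ) := by
    have h_norm : Measurable fun p : E × E ↦ ‖V p.1 - V p.2‖ :=
      ((hV.comp_measurable measurable_fst).sub (hV.comp_measurable measurable_snd)).norm.measurable
    exact (h_norm.div (by fun_prop)).ennreal_ofReal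
  have hκ_symm (y z : E) : κ y z = κ z y := by simp only [κ, norm_sub_rev]
  calc ∫⁻ p : E × E, ENNReal.ofReal (‖g p.1 - g p.2‖ * ‖V p.1 - V p.2‖ /
        (‖p.2‖ ^ γ * ‖p.1 - p.2‖ ^ (finrank ℝ E + θ + σ))) ∂(ν.prod ν)
      ≤ ∫⁻ p : E × E, C * ((cutoffWeight R γ p.1 + cutoffWeight R γ p.2) * κ p.1 p.2)
          ∂(ν.prod ν) := by
        refine lintegral_mono fun p ↦ ?_
        convert ofReal_norm_sub_mul_div_le_cutoffWeight hg hR hγ hgR p.1 p.2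
          (norm_nonneg (V p.1 - V p.2)) (finrank ℝ E + θ + σ) using 5
        ring_nf
    _ = C * (2 * ∫⁻ z, cutoffWeight R γ z * gagliardoDensity ν σ V z ∂ν) := by
        rw [lintegral_const_mul' _ _ ENNReal.coe_ne_top,
          lintegral_prod_add_mul_of_symmetric (measurable_cutoffWeight R γ) hκ hκ_symm]
        simp only [κ, lintegral_increment_eq_gagliardoDensity]

theorem statement0_general {F : Type*} [SeminormedAddCommGroup F] {α β γ : ℝ} (hα0 : 0 ≤ α)
    (hα : α < finrank ℝ E) (hγ0 : 0 ≤ γ) (hγ : γ < finrank ℝ E) {C θ : ℝ≥0}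
    (hβ : finrank ℝ E + θ < β) (hβ' : β < finrank ℝ E + θ + 1) {g : E → F}
    (hg : HolderWith C θ g) (hgc : HasCompactSupport g) {υ : E} (hυ : υ ≠ 0) :
    Tendsto (fun μ : ℝ ↦ ∫⁻ p : E × E, ENNReal.ofReal (‖g p.1 - g p.2‖ *
        |‖υ + μ • p.1‖ ^ (-α) - ‖υ + μ • p.2‖ ^ (-α)| / (‖p.2‖ ^ γ * ‖p.1 - p.2‖ ^ β))
        ∂(ν.prod ν)) (𝓝[>] 0) (𝓝 0) := by
  have : Nontrivial E := nontrivial_of_finrank_pos (R := ℝ) (by exact_mod_cast hα0.trans_lt hα)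
  obtain ⟨σ, rfl⟩ : ∃ σ, β = finrank ℝ E + θ + σ := ⟨_, (add_sub_cancel _ _).symm⟩
  have hσ : σ ∈ Ioo (0 : ℝ) 1 := ⟨by linarith, by linarith⟩
  obtain ⟨R, hR, hgR⟩ := hgc.isCompact.isBounded.subset_ball_lt 1 0
  obtain ⟨K, hK, hUK⟩ := exists_eventually_gagliardoDensity_norm_rpow_neg_le ν hσ hα0 hα hυ
  have h_lim := tendsto_lintegral_mul_gagliardoDensity_comp_add_smul ν hσ.1 hK hUK
    (measurable_cutoffWeight R γ) (lintegral_cutoffWeight_ne_top ν R hγ)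
    (isBounded_ball.subset (support_cutoffWeight_subset R γ))
  have h_bound : Tendsto (fun μ : ℝ ↦ C * (2 * ∫⁻ z, cutoffWeight R γ z *
      gagliardoDensity ν σ (fun y ↦ ‖υ + μ • y‖ ^ (-α)) z ∂ν)) (𝓝[>] 0) (𝓝 0) := by
    have h_two := ENNReal.Tendsto.const_mul h_lim (.inr (ENNReal.ofNat_ne_top (n := 2)))
    simpa using ENNReal.Tendsto.const_mul h_two (.inr (ENNReal.coe_ne_top (r := C)))
  refine tendsto_of_tendsto_of_tendsto_of_le_of_le tendsto_const_nhds h_bound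
    (fun _ ↦ zero_le) fun μ ↦ ?_
  have hV : Measurable fun y : E ↦ ‖υ + μ • y‖ ^ (-α) := by fun_prop
  exact lintegral_norm_sub_mul_norm_sub_div_le ν hg hR.le hγ0
    ((subset_tsupport g).trans hgR) hV.stronglyMeasurable σ

end ProductOfIncrements

/-- For `ρ` smooth with compact support in `(-2,2)` and `υ ≠ 0`, the quantity
`a[ρ](μ,υ)` tends to `0` as `μ → 0⁺`. -/
theorem statement0 (N : ℕ) (hN : 1 ≤ N) (s : ℝ) (hs : s ∈ Set.Ioo (0 : ℝ) 1)
    (hNs : 2 * s < N)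
    (ρ : ℝ → ℝ) (hρ : ContDiff ℝ (⊤ : ℕ∞) ρ) (hρc : HasCompactSupport ρ)
    (hρsupp : tsupport ρ ⊆ Set.Ioo (-2 : ℝ) 2)
    (υ : EuclideanSpace ℝ (Fin N)) (hυ : υ ≠ 0) :
    Tendsto (fun μ : ℝ =>
      ∫⁻ p : EuclideanSpace ℝ (Fin N) × EuclideanSpace ℝ (Fin N),
        ENNReal.ofReal
          (|ρ (‖p.1‖ ^ 2) - ρ (‖p.2‖ ^ 2)| *
            |‖υ + μ • p.1‖ ^ (2 * s - (N : ℝ)) - ‖υ + μ • p.2‖ ^ (2 * s - (N : ℝ))| /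
            (‖p.2‖ ^ ((N : ℝ) - 2 * s) * ‖p.1 - p.2‖ ^ ((N : ℝ) + 2 * s))))
      (𝓝[>] (0 : ℝ)) (𝓝 0) := by
  lift s to ℝ≥0 using hs.1.le
  have hg : ContDiff ℝ 1 fun x : EuclideanSpace ℝ (Fin N) ↦ ρ (‖x‖ ^ 2) :=
    (hρ.comp (contDiff_norm_sq ℝ)).of_le (by exact_mod_cast le_top)
  have hgc : HasCompactSupport fun x : EuclideanSpace ℝ (Fin N) ↦ ρ (‖x‖ ^ 2) :=
    hasCompactSupport_comp_norm_sq hρc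
  obtain ⟨C, hC⟩ := exists_holderWith_of_contDiff_of_hasCompactSupport hg hgc
    (NNReal.coe_le_coe.1 hs.2.le)
  have h_dim : (finrank ℝ (EuclideanSpace ℝ (Fin N)) : ℝ) = N := by
    rw [finrank_euclideanSpace_fin]
  have hα : (N : ℝ) - 2 * s < finrank ℝ (EuclideanSpace ℝ (Fin N)) := by linarith [hs.1]
  simpa only [neg_sub, Real.norm_eq_abs, Measure.volume_eq_prod] using
    statement0_general volume (sub_nonneg.2 hNs.le) hα (sub_nonneg.2 hNs.le) hα
      (β := N + 2 * s) (by linarith [hs.1]) (by linarith [hs.2]) hC hgc hυ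
end
end

section
/- Let N ≥ 1 be an integer and s ∈ (0,1) with N > 2s. Let α ∈ (0, 2s/(N+1)) and set γ := N − 2s + α. Then for every υ ∈ ℝ^N with υ ≠ 0, lim_{μ→0⁺} μ^α ∫_{ℝ^N \ B_4(0)} (1+|z|^α) · (1+|z|²)^{−(N+2s)/2} · |υ+μz|^{−γ} dz = 0. -/
/-!
Let `w` be the weight and `f` the singular kernel `|·|^{-γ}`. The integral of `w(z) f(υ + μz)`
stays bounded as `μ → 0`, so any positive power of `μ` in front of it forces the limit `0`.

For the bound, put `r = |υ| / 2` and let `d` be the dimension. Where `|υ + μz| ≥ r`, the kernel is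
at most `r^{-γ}` and `w` is integrable. Where `|υ + μz| < r`, necessarily `|z| ≥ r / |μ|`, so
`w(z) ≤ C |z|^{-d}` is at most `C r^{-d} |μ|^d`; this factor `|μ|^d` is exactly the Jacobian of
`y = υ + μz`, and what remains is the integral of `f` over the ball of radius `r`, finite as
`γ < d`.
-/

open MeasureTheory Filter
open scoped ENNReal Topology

noncomputable section

section WeightEstimates

variable {t α p : ℝ}

lemma rpow_le_one_add_sq_rpow_half (ht : 0 ≤ t) (hα : 0 ≤ α) :
    t ^ α ≤ (1 + t ^ 2) ^ (α / 2) := by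
  have hsq : (t ^ 2) ^ (α / 2) = t ^ α := by
    rw [← Real.rpow_natCast_mul ht]
    congr 1
    push_cast
    ring
  rw [← hsq]
  gcongr
  linarith

lemma one_add_rpow_mul_one_add_sq_rpow_neg_le (ht : 0 ≤ t) (hα : 0 ≤ α) :
    (1 + t ^ α) * (1 + t ^ 2) ^ (-(p / 2)) ≤ 2 * (1 + t ^ 2) ^ (-(p - α) / 2) := by
  have one_le_rpow : 1 ≤ (1 + t ^ 2) ^ (α / 2) :=
    Real.one_le_rpow (by nlinarith) (by positivity)
  have rpow_le := rpow_le_one_add_sq_rpow_half ht hα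
  calc (1 + t ^ α) * (1 + t ^ 2) ^ (-(p / 2))
      ≤ (2 * (1 + t ^ 2) ^ (α / 2)) * (1 + t ^ 2) ^ (-(p / 2)) := by
        gcongr
        linarith
    _ = 2 * (1 + t ^ 2) ^ (-(p - α) / 2) := by
        rw [mul_assoc, ← Real.rpow_add (by positivity)]
        ring_nf

lemma pow_mul_one_add_rpow_mul_one_add_sq_rpow_neg_le_two {n : ℕ} (ht : 0 ≤ t) (hα : 0 ≤ α)
    (hp : n + α ≤ p) :
    t ^ n * ((1 + t ^ α) * (1 + t ^ 2) ^ (-(p / 2))) ≤ 2 := by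
  have pow_le : t ^ n ≤ (1 + t ^ 2) ^ ((n : ℝ) / 2) := by
    rw [← Real.rpow_natCast]
    exact rpow_le_one_add_sq_rpow_half ht n.cast_nonneg
  calc t ^ n * ((1 + t ^ α) * (1 + t ^ 2) ^ (-(p / 2)))
      ≤ (1 + t ^ 2) ^ ((n : ℝ) / 2) * (2 * (1 + t ^ 2) ^ (-(p - α) / 2)) := by
        exact mul_le_mul pow_le (one_add_rpow_mul_one_add_sq_rpow_neg_le ht hα)
          (by positivity) (by positivity)
    _ = 2 * (1 + t ^ 2) ^ (-(p - α - n) / 2) := by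
        rw [mul_left_comm, ← Real.rpow_add (by positivity)]
        ring_nf
    _ ≤ 2 * 1 := by
        gcongr
        exact Real.rpow_le_one_of_one_le_of_nonpos (by nlinarith) (by linarith)
    _ = 2 := mul_one 2

end WeightEstimates

lemma tendsto_ofReal_rpow_mul_nhdsGT_zero {a : ℝ} (ha : 0 < a) {F : ℝ → ℝ≥0∞} {K : ℝ≥0∞}
    (hK : K ≠ ∞) (hF : ∀ μ > 0, F μ ≤ K) :
    Tendsto (fun μ => ENNReal.ofReal (μ ^ a) * F μ) (𝓝[>] 0) (𝓝 0) := by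
  have tendsto_rpow : Tendsto (fun μ : ℝ => μ ^ a) (𝓝[>] 0) (𝓝 0) := by
    simpa only [Real.zero_rpow ha.ne'] using
      (Real.continuousAt_rpow_const 0 a (.inr ha.le)).tendsto.mono_left nhdsWithin_le_nhds
  have tendsto_mul_const : Tendsto (fun μ : ℝ => ENNReal.ofReal (μ ^ a) * K) (𝓝[>] 0) (𝓝 0) := by
    simpa only [ENNReal.ofReal_zero, zero_mul] using
      ENNReal.Tendsto.mul_const (ENNReal.tendsto_ofReal tendsto_rpow) (.inr hK)
  refine tendsto_of_tendsto_of_tendsto_of_le_of_le' tendsto_const_nhds tendsto_mul_const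
    (.of_forall fun _ => zero_le) ?_
  filter_upwards [self_mem_nhdsWithin] with μ hμ
  gcongr
  exact hF μ hμ

section NormedSpace

variable {E : Type*} [NormedAddCommGroup E] [NormedSpace ℝ E]

lemma ofReal_le_enorm_mul_of_norm_add_smul_lt {r μ : ℝ} {υ z : E} (hυ : 2 * r ≤ ‖υ‖)
    (hz : ‖υ + μ • z‖ < r) : ENNReal.ofReal r ≤ ‖μ‖ₑ * ‖z‖ₑ := by
  have norm_le : ‖υ‖ ≤ ‖υ + μ • z‖ + ‖μ • z‖ := by
    simpa only [add_sub_cancel_right] using norm_sub_le (υ + μ • z) (μ • z)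
  rw [← enorm_smul, ← ofReal_norm]
  exact ENNReal.ofReal_le_ofReal (by linarith)

lemma mul_comp_add_smul_le {w f : E → ℝ≥0∞} {M C : ℝ≥0∞} {r : ℝ} {n : ℕ} {υ : E} (hr : 0 < r)
    (hυ : 2 * r ≤ ‖υ‖) (hM : ∀ y, r ≤ ‖y‖ → f y ≤ M) (hC : ∀ z, ‖z‖ₑ ^ n * w z ≤ C) (μ : ℝ)
    (z : E) :
    w z * f (υ + μ • z) ≤
      M * w z +
        C / ENNReal.ofReal r ^ n * (‖μ‖ₑ ^ n * (Metric.ball 0 r).indicator f (υ + μ • z)) := by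
  rcases le_or_gt r ‖υ + μ • z‖ with far | near
  · rw [mul_comm]
    refine le_add_right ?_
    gcongr
    exact hM _ far
  · have weight_le : w z ≤ C * ‖μ‖ₑ ^ n / ENNReal.ofReal r ^ n := by
      rw [ENNReal.le_div_iff_mul_le (by simp [hr]) (by simp)]
      calc w z * ENNReal.ofReal r ^ n
          ≤ w z * (‖μ‖ₑ * ‖z‖ₑ) ^ n := by
            gcongr
            exact ofReal_le_enorm_mul_of_norm_add_smul_lt hυ near
        _ = ‖z‖ₑ ^ n * w z * ‖μ‖ₑ ^ n := by ring
        _ ≤ C * ‖μ‖ₑ ^ n := by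
            gcongr
            exact hC z
    rw [Set.indicator_of_mem (mem_ball_zero_iff.mpr near)]
    refine le_add_left ?_
    calc w z * f (υ + μ • z)
        ≤ C * ‖μ‖ₑ ^ n / ENNReal.ofReal r ^ n * f (υ + μ • z) := by gcongr
      _ = C / ENNReal.ofReal r ^ n * (‖μ‖ₑ ^ n * f (υ + μ • z)) := by
          simp only [div_eq_mul_inv]
          ring

end NormedSpace

section Haar

open Module

variable {E : Type*} [NormedAddCommGroup E] [NormedSpace ℝ E] [FiniteDimensional ℝ E]
  [MeasurableSpace E] [BorelSpace E] {ν : Measure E} [ν.IsAddHaarMeasure]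

lemma enorm_pow_finrank_mul_lintegral_comp_add_smul {f : E → ℝ≥0∞} (hf : Measurable f) (υ : E)
    {μ : ℝ} (hμ : μ ≠ 0) :
    ‖μ‖ₑ ^ finrank ℝ E * ∫⁻ z, f (υ + μ • z) ∂ν = ∫⁻ y, f y ∂ν := by
  have jacobian : ENNReal.ofReal |(μ ^ finrank ℝ E)⁻¹| = (‖μ‖ₑ ^ finrank ℝ E)⁻¹ := by
    rw [← Real.enorm_eq_ofReal_abs, enorm_inv (pow_ne_zero _ hμ), enorm_pow]
  have map_eq : ∫⁻ z, f (υ + μ • z) ∂ν = ∫⁻ y, f (υ + y) ∂(ν.map (μ • ·)) := by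
    rw [lintegral_map (by fun_prop) (by fun_prop)]
  rw [map_eq, Measure.map_addHaar_smul _ hμ, lintegral_smul_measure, lintegral_add_left_eq_self,
    smul_eq_mul, jacobian, ENNReal.mul_inv_cancel_left (by simp [hμ]) (by simp)]

lemma lintegral_mul_comp_add_smul_le {w f : E → ℝ≥0∞} (hw : Measurable w) (hf : Measurable f)
    {M C : ℝ≥0∞} {r : ℝ} {υ : E} (hr : 0 < r) (hυ : 2 * r ≤ ‖υ‖) (hM : ∀ y, r ≤ ‖y‖ → f y ≤ M)
    (hC : ∀ z, ‖z‖ₑ ^ finrank ℝ E * w z ≤ C) {μ : ℝ} (hμ : μ ≠ 0) :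
    ∫⁻ z, w z * f (υ + μ • z) ∂ν ≤
      M * ∫⁻ z, w z ∂ν + C / ENNReal.ofReal r ^ finrank ℝ E * ∫⁻ y in Metric.ball 0 r, f y ∂ν := by
  have indicator_meas : Measurable ((Metric.ball (0 : E) r).indicator f) :=
    hf.indicator measurableSet_ball
  refine (lintegral_mono (mul_comp_add_smul_le hr hυ hM hC μ)).trans_eq ?_
  rw [lintegral_add_left (by fun_prop), lintegral_const_mul _ hw,
    lintegral_const_mul _ (by fun_prop), lintegral_const_mul _ (by fun_prop),
    enorm_pow_finrank_mul_lintegral_comp_add_smul indicator_meas υ hμ,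
    lintegral_indicator measurableSet_ball]

lemma setLIntegral_ball_norm_rpow_neg_lt_top {γ : ℝ} (hγ₀ : 0 ≤ γ) (hγ : γ < finrank ℝ E) (r : ℝ) :
    ∫⁻ y in Metric.ball (0 : E) r, ENNReal.ofReal (‖y‖ ^ (-γ)) ∂ν < ∞ := by
  have finrank_pos : 1 ≤ finrank ℝ E := by exact_mod_cast hγ₀.trans_lt hγ
  refine (integrableOn_ball_of_norm_le_rpow (C := 1) finrank_pos hγ
    (.of_forall fun y => ?_) ?_).lintegral_lt_top
  · rw [Real.norm_of_nonneg (by positivity), one_mul]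
  · exact (measurable_norm.pow_const _).aestronglyMeasurable

lemma lintegral_one_add_norm_rpow_mul_one_add_norm_sq_rpow_neg_lt_top {α p : ℝ} (hα : 0 ≤ α)
    (hp : finrank ℝ E + α < p) :
    ∫⁻ z : E, ENNReal.ofReal ((1 + ‖z‖ ^ α) * (1 + ‖z‖ ^ 2) ^ (-(p / 2))) ∂ν < ∞ :=
  (lintegral_mono fun z => ENNReal.ofReal_le_ofReal
    (one_add_rpow_mul_one_add_sq_rpow_neg_le (norm_nonneg z) hα)).trans_lt
    ((integrable_rpow_neg_one_add_norm_sq (by linarith)).const_mul 2).lintegral_lt_top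

lemma exists_lintegral_weight_mul_norm_add_smul_rpow_neg_le {α p γ : ℝ} (hα : 0 ≤ α)
    (hp : finrank ℝ E + α < p) (hγ₀ : 0 ≤ γ) (hγ : γ < finrank ℝ E) {υ : E} (hυ : υ ≠ 0) :
    ∃ K ≠ ∞, ∀ μ : ℝ, μ ≠ 0 →
      ∫⁻ z, ENNReal.ofReal ((1 + ‖z‖ ^ α) * (1 + ‖z‖ ^ 2) ^ (-(p / 2)) * ‖υ + μ • z‖ ^ (-γ)) ∂ν
        ≤ K := by
  let w (z : E) := ENNReal.ofReal ((1 + ‖z‖ ^ α) * (1 + ‖z‖ ^ 2) ^ (-(p / 2)))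
  let f (y : E) := ENNReal.ofReal (‖y‖ ^ (-γ))
  let r := ‖υ‖ / 2
  have r_pos : 0 < r := half_pos (norm_pos_iff.mpr hυ)
  have kernel_le (y : E) (hy : r ≤ ‖y‖) : f y ≤ ENNReal.ofReal (r ^ (-γ)) :=
    ENNReal.ofReal_le_ofReal (Real.rpow_le_rpow_of_nonpos r_pos hy (neg_nonpos.mpr hγ₀))
  have weight_decay (z : E) : ‖z‖ₑ ^ finrank ℝ E * w z ≤ ENNReal.ofReal 2 := by
    rw [← ofReal_norm, ← ENNReal.ofReal_pow (norm_nonneg z), ← ENNReal.ofReal_mul (by positivity)]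
    exact ENNReal.ofReal_le_ofReal
      (pow_mul_one_add_rpow_mul_one_add_sq_rpow_neg_le_two (norm_nonneg z) hα hp.le)
  have weight_lt_top : ∫⁻ z, w z ∂ν < ∞ :=
    lintegral_one_add_norm_rpow_mul_one_add_norm_sq_rpow_neg_lt_top hα hp
  have kernel_lt_top : ∫⁻ y in Metric.ball 0 r, f y ∂ν < ∞ :=
    setLIntegral_ball_norm_rpow_neg_lt_top hγ₀ hγ r
  refine ⟨ENNReal.ofReal (r ^ (-γ)) * ∫⁻ z, w z ∂ν +
    ENNReal.ofReal 2 / ENNReal.ofReal r ^ finrank ℝ E * ∫⁻ y in Metric.ball 0 r, f y ∂ν,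
    by finiteness, fun μ hμ => ?_⟩
  calc ∫⁻ z, ENNReal.ofReal
        ((1 + ‖z‖ ^ α) * (1 + ‖z‖ ^ 2) ^ (-(p / 2)) * ‖υ + μ • z‖ ^ (-γ)) ∂ν
      = ∫⁻ z, w z * f (υ + μ • z) ∂ν :=
        lintegral_congr fun z => ENNReal.ofReal_mul (by positivity)
    _ ≤ _ := lintegral_mul_comp_add_smul_le (by fun_prop) (by fun_prop) r_pos
        (mul_div_cancel₀ _ two_ne_zero).le kernel_le weight_decay hμ

theorem statement1_general {a α p γ : ℝ} (ha : 0 < a) (hα : 0 ≤ α)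
    (hp : finrank ℝ E + α < p) (hγ₀ : 0 ≤ γ) (hγ : γ < finrank ℝ E) {υ : E} (hυ : υ ≠ 0)
    (S : Set E) :
    Tendsto (fun μ : ℝ => ENNReal.ofReal (μ ^ a) *
        ∫⁻ z in S, ENNReal.ofReal
          ((1 + ‖z‖ ^ α) * (1 + ‖z‖ ^ 2) ^ (-(p / 2)) * ‖υ + μ • z‖ ^ (-γ)) ∂ν)
      (𝓝[>] 0) (𝓝 0) := by
  obtain ⟨K, hK, lintegral_le⟩ :=
    exists_lintegral_weight_mul_norm_add_smul_rpow_neg_le (ν := ν) hα hp hγ₀ hγ hυ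
  exact tendsto_ofReal_rpow_mul_nhdsGT_zero ha hK fun μ hμ =>
    (setLIntegral_le_lintegral _ _).trans (lintegral_le μ hμ.ne')

end Haar

/-- With `γ := N - 2s + α` and `α ∈ (0, 2s/(N+1))`, for every `υ ≠ 0`,
`μ^α ∫_{ℝ^N \ B_4(0)} (1+|z|^α)(1+|z|²)^{-(N+2s)/2} |υ+μz|^{-γ} dz → 0` as `μ → 0⁺`. -/
theorem statement1 (N : ℕ) (hN : 1 ≤ N) (s α : ℝ) (hs : s ∈ Set.Ioo (0 : ℝ) 1)
    (hNs : 2 * s < N) (hα : α ∈ Set.Ioo (0 : ℝ) (2 * s / ((N : ℝ) + 1)))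
    (υ : EuclideanSpace ℝ (Fin N)) (hυ : υ ≠ 0) :
    Tendsto (fun μ : ℝ =>
      ENNReal.ofReal (μ ^ α) *
        ∫⁻ z in (Metric.ball (0 : EuclideanSpace ℝ (Fin N)) 4)ᶜ,
          ENNReal.ofReal ((1 + ‖z‖ ^ α) * (1 + ‖z‖ ^ 2) ^ (-(((N : ℝ) + 2 * s) / 2)) *
            ‖υ + μ • z‖ ^ (-((N : ℝ) - 2 * s + α))))
      (𝓝[>] (0 : ℝ)) (𝓝 0) := by
  have hα_lt : α < 2 * s :=
    hα.2.trans_le (div_le_self (by linarith [hs.1]) (by linarith [N.cast_nonneg (α := ℝ)]))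
  exact statement1_general hα.1 hα.1.le (by rw [finrank_euclideanSpace_fin]; linarith)
    (by linarith [hα.1]) (by rw [finrank_euclideanSpace_fin]; linarith) hυ _
end
end

section
/- Let N ≥ 1, s ∈ (0,1), and let Φ : (−1/2, 1/2) × ℝ^N → ℝ^N, written Φ_t(x) := Φ(t,x), satisfy: Φ_0 = id; there is c ≥ 1 with c⁻¹|u−v| ≤ |Φ_t(u) − Φ_t(v)| ≤ c|u−v| for all t, u, v; for each t the map x ↦ Φ_t(x) is differentiable with derivative D_xΦ_t satisfying ‖D_xΦ_t(u)‖ ≤ C₀ and ‖D_xΦ_t(u) − D_xΦ_t(v)‖ ≤ C₀|u−v|; for each x the maps t ↦ Φ_t(x) and t ↦ D_xΦ_t(x) are differentiable in t, with ∂_t D_xΦ_t(x) = D_x(∂_tΦ_t)(x), and the vector field V_t := ∂_tΦ_t satisfies, for all t, u, v: |V_t(u) − V_t(v)| ≤ C₀|u−v|, ‖D_xV_t(u)‖ ≤ C₀, ‖D_xV_t(u) − D_xV_t(v)‖ ≤ C₀|u−v|, and t ↦ V_t(x) and t ↦ D_xV_t(x) are continuous. Define κ_t(y,z) := (c_{N,s}/2)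 · det(D_xΦ_t(y)) · det(D_xΦ_t(z)) / |Φ_t(y) − Φ_t(z)|^{N+2s} for y ≠ z (so κ_0(y,z) = (c_{N,s}/2)|y−z|^{−N−2s}), and for t ≠ 0 set κ̄_t(y,z) := (κ_t(y,z) − κ_0(y,z))/t and κ̄_t^o(y,z) := (κ̄_t(y,y+z) − κ̄_t(y,y−z))/2. Then there exists C > 0, independent of t, y, z, such that for all t ≠ 0 in (−1/2,1/2), all y ∈ ℝ^N and all z ∈ ℝ^N with z ≠ 0: |κ̄_t^o(y,z)| ≤ C · min( |z|^{−N−2s}, |z|^{1−N−2s} ). -/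
/-!
Write `p = N + 2s`. A kernel value at the pair `(x + z, x)` depends on `Φ_t` only through the jet
`J_t(x) = (DΦ_t(x + z), DΦ_t(x), (Φ_t(x + z) - Φ_t(x)) / |z|)`: it equals
`(c_{N,s}/2) |z|^{-p} G(J_t(x))` with `G(A, B, a) = det A · det B · |a|^{-p}`. As the kernel is
symmetric, `κ_t(y, y + z)` and `κ_t(y, y - z)` are the values belonging to `x = y` and `x = y - z`.

The bi-Lipschitz bound keeps the jets in a compact set on which `G` is smooth. The jet is linear in
the map, so `t ↦ J_t(x)` moves with velocity the jet of `V_t`; and since `Φ_t` and `V_t` are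
`C^{1,1}`, replacing `x = y` by `x = y - z` changes both jets by only `O(min(1, |z|))`. Hence
`d/dt [G(J_t(y)) - G(J_t(y - z))] = O(min(1, |z|))`, and the mean value inequality in `t` gives the
claim, because `|z|^{-p} min(1, |z|) = min(|z|^{-p}, |z|^{1-p})`.
-/

noncomputable section

/-- The normalizing constant `c_{N,s} = π^{-N/2} s 4^s Γ((N+2s)/2) / Γ(1-s)`. -/
def cNs (N : ℕ) (s : ℝ) : ℝ :=
  Real.pi ^ (-(N : ℝ) / 2) * s * (4 : ℝ) ^ s *
    Real.Gamma (((N : ℝ) + 2 * s) / 2) / Real.Gamma (1 - s)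

/-- The deformed kernel
`κ_t(y,z) = (c_{N,s}/2) det(D_xΦ_t(y)) det(D_xΦ_t(z)) / |Φ_t(y) - Φ_t(z)|^{N+2s}`. -/
def kappa (N : ℕ) (s : ℝ)
    (Φ : ℝ → EuclideanSpace ℝ (Fin N) → EuclideanSpace ℝ (Fin N)) (t : ℝ)
    (y z : EuclideanSpace ℝ (Fin N)) : ℝ :=
  cNs N s / 2 * ((fderiv ℝ (Φ t) y).det * (fderiv ℝ (Φ t) z).det) /
    ‖Φ t y - Φ t z‖ ^ ((N : ℝ) + 2 * s)

open Set Metric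
open scoped NNReal

lemma norm_inv_smul_le {F : Type*} [NormedAddCommGroup F] [NormedSpace ℝ F] {a : F} {r B : ℝ}
    (hr : 0 ≤ r) (hB : 0 ≤ B) (h : ‖a‖ ≤ B * r) : ‖r⁻¹ • a‖ ≤ B := by
  rw [norm_smul, norm_inv, Real.norm_of_nonneg hr]
  exact inv_mul_le_of_le_mul₀ hr hB (by rwa [mul_comm])

lemma rpow_neg_mul_min_two_le {r : ℝ} (hr : 0 < r) (p : ℝ) :
    r ^ (-p) * min 2 r ≤ 2 * min (r ^ (-p)) (r ^ (1 - p)) := by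
  have hrp : 0 ≤ r ^ (-p) := Real.rpow_nonneg hr.le _
  have hmin : min (r ^ (-p)) (r ^ (1 - p)) = r ^ (-p) * min 1 r := by
    rw [mul_min_of_nonneg _ _ hrp, mul_one, ← Real.rpow_add_one hr.ne', neg_add_eq_sub]
  have hmin_two : min 2 r ≤ 2 * min 1 r := by
    rw [mul_min_of_nonneg _ _ zero_le_two, mul_one]
    exact min_le_min_left 2 (by linarith)
  rw [hmin, mul_left_comm]
  exact mul_le_mul_of_nonneg_left hmin_two hrp

lemma norm_clm_apply_sub_apply_le {𝕜 X F : Type*} [NontriviallyNormedField 𝕜]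
    [NormedAddCommGroup X] [NormedSpace 𝕜 X] [NormedAddCommGroup F] [NormedSpace 𝕜 F]
    (A B : X →L[𝕜] F) (u v : X) :
    ‖A u - B v‖ ≤ ‖A - B‖ * ‖u‖ + ‖B‖ * ‖u - v‖ := by
  have split : A u - B v = (A - B) u + B (u - v) := by simp
  rw [split]
  exact (norm_add_le _ _).trans (add_le_add ((A - B).le_opNorm u) (B.le_opNorm (u - v)))

lemma contDiff_clm_det {𝕜 E : Type*} [NontriviallyNormedField 𝕜] [CompleteSpace 𝕜]
    [NormedAddCommGroup E] [NormedSpace 𝕜 E] [FiniteDimensional 𝕜 E] {n : WithTop ℕ∞} :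
    ContDiff 𝕜 n (ContinuousLinearMap.det : (E →L[𝕜] E) → 𝕜) := by
  let b := Module.finBasis 𝕜 E
  have det_eq (A : E →L[𝕜] E) :
      A.det = ∑ σ : Equiv.Perm _, (Equiv.Perm.sign σ : 𝕜) * ∏ i, b.repr (A (b i)) (σ i) := by
    rw [ContinuousLinearMap.det, ← LinearMap.det_toMatrix b, Matrix.det_apply']
    simp only [LinearMap.toMatrix_apply, ContinuousLinearMap.coe_coe]
  have contDiff_entry (i j) : ContDiff 𝕜 n fun A : E →L[𝕜] E => b.repr (A (b i)) j :=
    (LinearMap.toContinuousLinearMap (b.coord j)).contDiff.comp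
      (contDiff_id.clm_apply contDiff_const)
  rw [funext det_eq]
  exact ContDiff.sum fun σ _ => contDiff_const.mul (contDiff_prod fun i _ => contDiff_entry i (σ i))

section Increments

variable {X F : Type*} [NormedAddCommGroup X] [NormedSpace ℝ X]
  [NormedAddCommGroup F] [NormedSpace ℝ F]

-- `K` need not be convex: the bound comes from compactness, not from the mean value inequality.
lemma exists_lipschitzOnWith_fderiv_of_isCompact {g : X → F} {K : Set X} (hK : IsCompact K)
    (hg : ∀ x ∈ K, ContDiffAt ℝ 2 g x) : ∃ L, LipschitzOnWith L (fderiv ℝ g) K := by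
  refine LocallyLipschitzOn.exists_lipschitzOnWith_of_compact hK fun x hx => ?_
  obtain ⟨L, u, hu, hL⟩ :=
    ((hg x hx).fderiv_right (m := 1) (by norm_num)).exists_lipschitzOnWith
  exact ⟨L, u, mem_nhdsWithin_of_mem_nhds hu, hL⟩

lemma norm_comp_sub_comp_increment_le {g : X → F} {K : Set X} {L : ℝ≥0} {D : ℝ}
    (hg : ∀ x ∈ K, DifferentiableAt ℝ g x) (hL : LipschitzOnWith L (fderiv ℝ g) K)
    (hD : ∀ x ∈ K, ‖fderiv ℝ g x‖ ≤ D)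
    {I : Set ℝ} (hI : Convex ℝ I) {P Q P' Q' : ℝ → X} {M ε : ℝ}
    (hP : ∀ t ∈ I, HasDerivWithinAt P (P' t) I t) (hQ : ∀ t ∈ I, HasDerivWithinAt Q (Q' t) I t)
    (hPK : MapsTo P I K) (hQK : MapsTo Q I K) (hP' : ∀ t ∈ I, ‖P' t‖ ≤ M)
    (hPQ : ∀ t ∈ I, ‖P t - Q t‖ ≤ ε) (hPQ' : ∀ t ∈ I, ‖P' t - Q' t‖ ≤ ε)
    {τ t : ℝ} (hτ : τ ∈ I) (ht : t ∈ I) :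
    ‖(g (P t) - g (Q t)) - (g (P τ) - g (Q τ))‖ ≤ (L * M + D) * ε * |t - τ| := by
  refine hI.norm_image_sub_le_of_norm_hasDerivWithin_le (f := fun t => g (P t) - g (Q t))
    (fun r hr => ((hg _ (hPK hr)).hasFDerivAt.comp_hasDerivWithinAt r (hP r hr)).sub
      ((hg _ (hQK hr)).hasFDerivAt.comp_hasDerivWithinAt r (hQ r hr))) (fun r hr => ?_) hτ ht
  have hDPQ : ‖fderiv ℝ g (P r) - fderiv ℝ g (Q r)‖ ≤ L * ε :=
    hL.norm_sub_le_of_le (hPK hr) (hQK hr) (hPQ r hr)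
  calc ‖fderiv ℝ g (P r) (P' r) - fderiv ℝ g (Q r) (Q' r)‖
      ≤ ‖fderiv ℝ g (P r) - fderiv ℝ g (Q r)‖ * ‖P' r‖ + ‖fderiv ℝ g (Q r)‖ * ‖P' r - Q' r‖ :=
        norm_clm_apply_sub_apply_le _ _ _ _
    _ ≤ L * ε * M + D * ε :=
        add_le_add
          (mul_le_mul hDPQ (hP' r hr) (norm_nonneg _) ((norm_nonneg _).trans hDPQ))
          (mul_le_mul (hD _ (hQK hr)) (hPQ' r hr) (norm_nonneg _)
            ((norm_nonneg _).trans (hD _ (hQK hr))))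
    _ = (L * M + D) * ε := by ring

end Increments

section TwoPointJet

variable {E F : Type*} [NormedAddCommGroup E] [NormedSpace ℝ E]
  [NormedAddCommGroup F] [NormedSpace ℝ F]

/-- `f` is differentiable with derivative bounded by `M` and `M`-Lipschitz; the `C^{1,1}` bound
imposed on the maps `Φ_t` and on the vector fields `V_t`. -/
structure IsC11With (M : ℝ) (f : E → F) : Prop where
  differentiable : Differentiable ℝ f
  norm_fderiv_le : ∀ u, ‖fderiv ℝ f u‖ ≤ M
  norm_fderiv_sub_le : ∀ u v, ‖fderiv ℝ f u - fderiv ℝ f v‖ ≤ M * ‖u - v‖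

namespace IsC11With

variable {M : ℝ} {f : E → F}

lemma nonneg (hf : IsC11With M f) : 0 ≤ M :=
  (norm_nonneg _).trans (hf.norm_fderiv_le 0)

lemma norm_sub_le (hf : IsC11With M f) (u v : E) : ‖f u - f v‖ ≤ M * ‖u - v‖ :=
  convex_univ.norm_image_sub_le_of_norm_fderiv_le (fun x _ => hf.differentiable x)
    (fun x _ => hf.norm_fderiv_le x) (mem_univ v) (mem_univ u)

lemma norm_fderiv_sub_le_min (hf : IsC11With M f) (u v : E) :
    ‖fderiv ℝ f u - fderiv ℝ f v‖ ≤ M * min 2 ‖u - v‖ := by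
  rw [mul_min_of_nonneg _ _ hf.nonneg, mul_two]
  exact le_min (norm_sub_le_of_le (hf.norm_fderiv_le u) (hf.norm_fderiv_le v))
    (hf.norm_fderiv_sub_le u v)

lemma norm_increment_sub_increment_le (hf : IsC11With M f) (x x' z : E) :
    ‖(f (x + z) - f x) - (f (x' + z) - f x')‖ ≤ M * min 2 ‖z‖ * ‖x - x'‖ := by
  have hasFDerivAt_increment (u : E) : HasFDerivAt (fun u => f (u + z) - f u)
      (fderiv ℝ f (u + z) - fderiv ℝ f u) u :=
    ((hasFDerivAt_comp_add_right z).2 (hf.differentiable _).hasFDerivAt).sub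
      (hf.differentiable u).hasFDerivAt
  refine convex_univ.norm_image_sub_le_of_norm_hasFDerivWithin_le
    (fun u _ => (hasFDerivAt_increment u).hasFDerivWithinAt) (fun u _ => ?_)
    (mem_univ x') (mem_univ x)
  simpa only [add_sub_cancel_left] using hf.norm_fderiv_sub_le_min (u + z) u

end IsC11With

/-- The derivatives of `f` at `x + z` and `x`, and the difference quotient of `f` between these
points: the data of `f` on which the pulled back kernel at the pair `(x + z, x)` depends. -/
def twoPointJet (f : E → F) (z x : E) : (E →L[ℝ] F) × (E →L[ℝ] F) × F :=
  (fderiv ℝ f (x + z), fderiv ℝ f x, ‖z‖⁻¹ • (f (x + z) - f x))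

namespace IsC11With

variable {M : ℝ} {f : E → F}

lemma norm_twoPointJet_le (hf : IsC11With M f) (z x : E) : ‖twoPointJet f z x‖ ≤ M := by
  refine norm_prod_le_iff.2 ⟨hf.norm_fderiv_le _, norm_prod_le_iff.2 ⟨hf.norm_fderiv_le _, ?_⟩⟩
  exact norm_inv_smul_le (norm_nonneg z) hf.nonneg (by simpa using hf.norm_sub_le (x + z) x)

lemma norm_twoPointJet_sub_le (hf : IsC11With M f) {x x' z : E} (hx : ‖x - x'‖ ≤ ‖z‖) :
    ‖twoPointJet f z x - twoPointJet f z x'‖ ≤ M * min 2 ‖z‖ := by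
  have hM := hf.nonneg
  have norm_fderiv_sub_le_min_norm {u v : E} (huv : u - v = x - x') :
      ‖fderiv ℝ f u - fderiv ℝ f v‖ ≤ M * min 2 ‖z‖ :=
    (hf.norm_fderiv_sub_le_min u v).trans (by rw [huv]; gcongr)
  refine norm_prod_le_iff.2 ⟨norm_fderiv_sub_le_min_norm (add_sub_add_right_eq_sub x x' z),
    norm_prod_le_iff.2 ⟨norm_fderiv_sub_le_min_norm rfl, ?_⟩⟩
  simp only [twoPointJet, Prod.snd_sub, ← smul_sub]
  exact norm_inv_smul_le (norm_nonneg z) (by positivity)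
    ((hf.norm_increment_sub_increment_le x x' z).trans (by gcongr))

end IsC11With

/-- `Φ_t`, `t ∈ I`, is a deformation with velocity field `V` and lower Lipschitz constant `δ`, where
`M` controls both `Φ_t` and `V_t` in `C^{1,1}`, uniformly in `t`. -/
structure IsC11Deformation (I : Set ℝ) (δ M : ℝ) (Φ V : ℝ → E → F) : Prop where
  le_norm_sub : ∀ t ∈ I, ∀ u v, δ * ‖u - v‖ ≤ ‖Φ t u - Φ t v‖
  isC11With : ∀ t ∈ I, IsC11With M (Φ t)
  isC11With_velocity : ∀ t ∈ I, IsC11With M (V t)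
  hasDerivWithinAt : ∀ x, ∀ t ∈ I, HasDerivWithinAt (fun τ => Φ τ x) (V t x) I t
  hasDerivWithinAt_fderiv : ∀ x, ∀ t ∈ I,
    HasDerivWithinAt (fun τ => fderiv ℝ (Φ τ) x) (fderiv ℝ (V t) x) I t

/-- A region containing the two-point jets, at nonzero displacement, of all maps `f` that are
`C^{1,1}` with constant `M` and satisfy `δ |u - v| ≤ |f u - f v|`. -/
def jetRegion (E F : Type*) [NormedAddCommGroup E] [NormedSpace ℝ E]
    [NormedAddCommGroup F] [NormedSpace ℝ F] (δ M : ℝ) : Set ((E →L[ℝ] F) × (E →L[ℝ] F) × F) :=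
  closedBall 0 M ∩ {q | δ ≤ ‖q.2.2‖}

lemma isCompact_jetRegion [FiniteDimensional ℝ E] [FiniteDimensional ℝ F] (δ M : ℝ) :
    IsCompact (jetRegion E F δ M) :=
  have : ProperSpace ((E →L[ℝ] F) × (E →L[ℝ] F) × F) := FiniteDimensional.proper ℝ _
  (isCompact_closedBall _ _).inter_right (isClosed_le continuous_const (by fun_prop))

namespace IsC11Deformation

variable {I : Set ℝ} {δ M : ℝ} {Φ V : ℝ → E → F}

lemma twoPointJet_mem_jetRegion (h : IsC11Deformation I δ M Φ V) {z : E} (hz : z ≠ 0) (x : E)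
    {t : ℝ} (ht : t ∈ I) : twoPointJet (Φ t) z x ∈ jetRegion E F δ M := by
  refine ⟨mem_closedBall_zero_iff.2 ((h.isC11With t ht).norm_twoPointJet_le z x), ?_⟩
  have hexp : δ * ‖z‖ ≤ ‖Φ t (x + z) - Φ t x‖ := by simpa using h.le_norm_sub t ht (x + z) x
  change δ ≤ ‖‖z‖⁻¹ • (Φ t (x + z) - Φ t x)‖
  rwa [norm_smul, norm_inv, norm_norm, le_inv_mul_iff₀ (norm_pos_iff.2 hz), mul_comm]

lemma hasDerivWithinAt_twoPointJet (h : IsC11Deformation I δ M Φ V) (z x : E)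
    {t : ℝ} (ht : t ∈ I) :
    HasDerivWithinAt (fun τ => twoPointJet (Φ τ) z x) (twoPointJet (V t) z x) I t :=
  (h.hasDerivWithinAt_fderiv (x + z) t ht).prodMk <|
    (h.hasDerivWithinAt_fderiv x t ht).prodMk <|
      ((h.hasDerivWithinAt (x + z) t ht).sub (h.hasDerivWithinAt x t ht)).const_smul ‖z‖⁻¹

end IsC11Deformation

lemma exists_norm_comp_twoPointJet_increment_le [FiniteDimensional ℝ E] [FiniteDimensional ℝ F]
    {G : Type*} [NormedAddCommGroup G] [NormedSpace ℝ G] {δ M : ℝ}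
    {g : (E →L[ℝ] F) × (E →L[ℝ] F) × F → G} (hg : ∀ q ∈ jetRegion E F δ M, ContDiffAt ℝ 2 g q) :
    ∃ C ≥ 0, ∀ (I : Set ℝ), Convex ℝ I → ∀ Φ V : ℝ → E → F, IsC11Deformation I δ M Φ V →
      ∀ t ∈ I, ∀ τ ∈ I, ∀ y z : E, z ≠ 0 →
        ‖(g (twoPointJet (Φ t) z y) - g (twoPointJet (Φ t) z (y - z))) -
            (g (twoPointJet (Φ τ) z y) - g (twoPointJet (Φ τ) z (y - z)))‖ ≤
          C * min 2 ‖z‖ * |t - τ| := by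
  have hK := isCompact_jetRegion (E := E) (F := F) δ M
  obtain ⟨L, hL⟩ := exists_lipschitzOnWith_fderiv_of_isCompact hK hg
  obtain ⟨D, hD⟩ := hK.exists_bound_of_continuousOn hL.continuousOn
  refine ⟨|(L * M + D) * M|, abs_nonneg _, fun I hI Φ V h t ht τ hτ y z hz => ?_⟩
  have hyz : ‖y - (y - z)‖ ≤ ‖z‖ := by rw [sub_sub_cancel]
  calc _ ≤ (L * M + D) * (M * min 2 ‖z‖) * |t - τ| :=
        norm_comp_sub_comp_increment_le
          (fun q hq => (hg q hq).differentiableAt two_ne_zero) hL hD hI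
          (fun _ hr => h.hasDerivWithinAt_twoPointJet z y hr)
          (fun _ hr => h.hasDerivWithinAt_twoPointJet z (y - z) hr)
          (fun _ hr => h.twoPointJet_mem_jetRegion hz y hr)
          (fun _ hr => h.twoPointJet_mem_jetRegion hz (y - z) hr)
          (fun r hr => (h.isC11With_velocity r hr).norm_twoPointJet_le z y)
          (fun r hr => (h.isC11With r hr).norm_twoPointJet_sub_le hyz)
          (fun r hr => (h.isC11With_velocity r hr).norm_twoPointJet_sub_le hyz) hτ ht
    _ ≤ |(L * M + D) * M| * min 2 ‖z‖ * |t - τ| := by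
        rw [← mul_assoc]
        gcongr
        exact le_abs_self _

end TwoPointJet

section Kernel

variable {E : Type*} [NormedAddCommGroup E]

/-- The odd part `κ^o(y, z) = (κ(y, y + z) - κ(y, y - z)) / 2` of a kernel in its displacement. -/
def oddPart (κ : E → E → ℝ) (y z : E) : ℝ :=
  (κ y (y + z) - κ y (y - z)) / 2

variable [InnerProductSpace ℝ E]

/-- The pullback under `f` of the kernel `k / |y - z|^p`, viewed as a density; the kernel `κ_t` is
the case `f = Φ_t`, `k = c_{N,s}/2`, `p = N + 2s`. -/
def pullbackKernel (k p : ℝ) (f : E → E) (y z : E) : ℝ :=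
  k * ((fderiv ℝ f y).det * (fderiv ℝ f z).det) / ‖f y - f z‖ ^ p

lemma pullbackKernel_comm (k p : ℝ) (f : E → E) (y z : E) :
    pullbackKernel k p f y z = pullbackKernel k p f z y := by
  rw [pullbackKernel, pullbackKernel, mul_comm (fderiv ℝ f y).det, norm_sub_rev]

/-- The function `(A, B, a) ↦ det A · det B · |a|^{-p}` expressing the pulled back kernel through
the two-point jet. -/
def kernelProfile (p : ℝ) (q : (E →L[ℝ] E) × (E →L[ℝ] E) × E) : ℝ :=
  q.1.det * q.2.1.det * ‖q.2.2‖ ^ (-p)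

lemma pullbackKernel_eq_kernelProfile_twoPointJet (k p : ℝ) (f : E → E) (x : E)
    {z : E} (hz : z ≠ 0) : pullbackKernel k p f (x + z) x =
      k * ‖z‖ ^ (-p) * kernelProfile p (twoPointJet f z x) := by
  have rescale : ‖z‖ ^ (-p) * ‖‖z‖⁻¹ • (f (x + z) - f x)‖ ^ (-p)
      = (‖f (x + z) - f x‖ ^ p)⁻¹ := by
    rw [← Real.mul_rpow (norm_nonneg _) (norm_nonneg _), norm_smul, norm_inv, norm_norm,
      mul_inv_cancel_left₀ (norm_ne_zero_iff.2 hz), Real.rpow_neg (norm_nonneg _)]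
  rw [pullbackKernel, kernelProfile, twoPointJet, div_eq_mul_inv, ← rescale]
  ring

lemma oddPart_pullbackKernel (k p : ℝ) (f : E → E) (y : E) {z : E} (hz : z ≠ 0) :
    oddPart (pullbackKernel k p f) y z = k / 2 * ‖z‖ ^ (-p) *
      (kernelProfile p (twoPointJet f z y) - kernelProfile p (twoPointJet f z (y - z))) := by
  have hplus := pullbackKernel_eq_kernelProfile_twoPointJet k p f y hz
  have hminus := pullbackKernel_eq_kernelProfile_twoPointJet k p f (y - z) hz
  rw [sub_add_cancel] at hminus
  rw [oddPart, pullbackKernel_comm k p f y (y + z), hplus, hminus]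
  ring

variable [FiniteDimensional ℝ E]

lemma contDiffAt_kernelProfile (p : ℝ) {n : WithTop ℕ∞} {q : (E →L[ℝ] E) × (E →L[ℝ] E) × E}
    (hq : q.2.2 ≠ 0) : ContDiffAt ℝ n (kernelProfile p) q :=
  have hdet₁ := (contDiff_clm_det.comp contDiff_fst).contDiffAt
  have hdet₂ := (contDiff_clm_det.comp (contDiff_fst.comp contDiff_snd)).contDiffAt
  have hnorm := (contDiff_snd.comp contDiff_snd).contDiffAt.norm ℝ hq
  (hdet₁.mul hdet₂).mul (hnorm.rpow_const_of_ne (norm_ne_zero_iff.2 hq))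

theorem exists_abs_oddPart_pullbackKernel_sub_le (k p M : ℝ) {δ : ℝ} (hδ : 0 < δ) :
    ∃ C > 0, ∀ (I : Set ℝ), Convex ℝ I → ∀ Φ V : ℝ → E → E, IsC11Deformation I δ M Φ V →
      ∀ t ∈ I, ∀ τ ∈ I, ∀ y z : E, z ≠ 0 →
        |oddPart (pullbackKernel k p (Φ t)) y z - oddPart (pullbackKernel k p (Φ τ)) y z| ≤
          C * min (‖z‖ ^ (-p)) (‖z‖ ^ (1 - p)) * |t - τ| := by
  obtain ⟨C, hC, hincr⟩ := exists_norm_comp_twoPointJet_increment_le (E := E) (M := M)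
    fun q hq => contDiffAt_kernelProfile p (norm_pos_iff.1 (hδ.trans_le hq.2))
  refine ⟨|k| * C + 1, by positivity, fun I hI Φ V h t ht τ hτ y z hz => ?_⟩
  rw [oddPart_pullbackKernel k p _ y hz, oddPart_pullbackKernel k p _ y hz, ← mul_sub, abs_mul,
    abs_mul, abs_div, abs_two, abs_of_nonneg (Real.rpow_nonneg (norm_nonneg z) _)]
  calc |k| / 2 * ‖z‖ ^ (-p) * |_|
      ≤ |k| / 2 * ‖z‖ ^ (-p) * (C * min 2 ‖z‖ * |t - τ|) := by
        gcongr
        exact hincr I hI Φ V h t ht τ hτ y z hz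
    _ = |k| * C / 2 * (‖z‖ ^ (-p) * min 2 ‖z‖) * |t - τ| := by ring
    _ ≤ |k| * C / 2 * (2 * min (‖z‖ ^ (-p)) (‖z‖ ^ (1 - p))) * |t - τ| := by
        gcongr |k| * C / 2 * ?_ * |t - τ|
        exact rpow_neg_mul_min_two_le (norm_pos_iff.2 hz) p
    _ = |k| * C * min (‖z‖ ^ (-p)) (‖z‖ ^ (1 - p)) * |t - τ| := by ring
    _ ≤ (|k| * C + 1) * min (‖z‖ ^ (-p)) (‖z‖ ^ (1 - p)) * |t - τ| := by
        gcongr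
        linarith

theorem statement6_general (k p M : ℝ) {δ : ℝ} (hδ : 0 < δ) :
    ∃ C > 0, ∀ (I : Set ℝ), Convex ℝ I → ∀ Φ V : ℝ → E → E, IsC11Deformation I δ M Φ V →
      ∀ t ∈ I, ∀ τ ∈ I, t ≠ τ → ∀ y z : E, z ≠ 0 →
        |oddPart (fun u v =>
            (pullbackKernel k p (Φ t) u v - pullbackKernel k p (Φ τ) u v) / (t - τ)) y z| ≤
          C * min (‖z‖ ^ (-p)) (‖z‖ ^ (1 - p)) := by
  obtain ⟨C, hC, hlip⟩ := exists_abs_oddPart_pullbackKernel_sub_le (E := E) k p M hδ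
  refine ⟨C, hC, fun I hI Φ V h t ht τ hτ htτ y z hz => ?_⟩
  have hquot : oddPart (fun u v =>
        (pullbackKernel k p (Φ t) u v - pullbackKernel k p (Φ τ) u v) / (t - τ)) y z =
      (oddPart (pullbackKernel k p (Φ t)) y z - oddPart (pullbackKernel k p (Φ τ)) y z) /
        (t - τ) := by
    simp only [oddPart]
    ring
  rw [hquot, abs_div, div_le_iff₀ (abs_pos.2 (sub_ne_zero.2 htτ))]
  exact hlip I hI Φ V h t ht τ hτ y z hz

end Kernel

/-- Bound on the odd part of the difference quotient of the deformed kernel: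
`|κ̄_t^o(y,z)| ≤ C min(|z|^{-N-2s}, |z|^{1-N-2s})` uniformly in `t`. -/
theorem statement6 (N : ℕ) (hN : 1 ≤ N) (s : ℝ) (hs : s ∈ Set.Ioo (0 : ℝ) 1)
    (Φ V : ℝ → EuclideanSpace ℝ (Fin N) → EuclideanSpace ℝ (Fin N))
    (c : ℝ) (hc : 1 ≤ c) (C₀ : ℝ) (hC₀ : 0 < C₀)
    (hΦ0 : Φ 0 = id)
    (hlow : ∀ t ∈ Set.Ioo (-(1/2) : ℝ) (1/2), ∀ u v,
      c⁻¹ * ‖u - v‖ ≤ ‖Φ t u - Φ t v‖)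
    (hup : ∀ t ∈ Set.Ioo (-(1/2) : ℝ) (1/2), ∀ u v,
      ‖Φ t u - Φ t v‖ ≤ c * ‖u - v‖)
    (hdiffx : ∀ t ∈ Set.Ioo (-(1/2) : ℝ) (1/2), Differentiable ℝ (Φ t))
    (hDbound : ∀ t ∈ Set.Ioo (-(1/2) : ℝ) (1/2), ∀ u, ‖fderiv ℝ (Φ t) u‖ ≤ C₀)
    (hDlip : ∀ t ∈ Set.Ioo (-(1/2) : ℝ) (1/2), ∀ u v,
      ‖fderiv ℝ (Φ t) u - fderiv ℝ (Φ t) v‖ ≤ C₀ * ‖u - v‖)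
    (hderivt : ∀ x, ∀ t ∈ Set.Ioo (-(1/2) : ℝ) (1/2),
      HasDerivAt (fun τ => Φ τ x) (V t x) t)
    (hderivtD : ∀ x, ∀ t ∈ Set.Ioo (-(1/2) : ℝ) (1/2),
      HasDerivAt (fun τ => fderiv ℝ (Φ τ) x) (fderiv ℝ (V t) x) t)
    (hVlip : ∀ t ∈ Set.Ioo (-(1/2) : ℝ) (1/2), ∀ u v,
      ‖V t u - V t v‖ ≤ C₀ * ‖u - v‖)
    (hVdiff : ∀ t ∈ Set.Ioo (-(1/2) : ℝ) (1/2), Differentiable ℝ (V t))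
    (hDVbound : ∀ t ∈ Set.Ioo (-(1/2) : ℝ) (1/2), ∀ u, ‖fderiv ℝ (V t) u‖ ≤ C₀)
    (hDVlip : ∀ t ∈ Set.Ioo (-(1/2) : ℝ) (1/2), ∀ u v,
      ‖fderiv ℝ (V t) u - fderiv ℝ (V t) v‖ ≤ C₀ * ‖u - v‖)
    (hVcont : ∀ x, ContinuousOn (fun t => V t x) (Set.Ioo (-(1/2) : ℝ) (1/2)))
    (hDVcont : ∀ x, ContinuousOn (fun t => fderiv ℝ (V t) x) (Set.Ioo (-(1/2) : ℝ) (1/2))) :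
    ∃ C > 0, ∀ t ∈ Set.Ioo (-(1/2) : ℝ) (1/2), t ≠ 0 →
      ∀ y z : EuclideanSpace ℝ (Fin N), z ≠ 0 →
        |((kappa N s Φ t y (y + z) - kappa N s Φ 0 y (y + z)) / t -
            (kappa N s Φ t y (y - z) - kappa N s Φ 0 y (y - z)) / t) / 2| ≤
          C * min (‖z‖ ^ (-(N : ℝ) - 2 * s)) (‖z‖ ^ (1 - (N : ℝ) - 2 * s)) := by
  obtain ⟨C, hC, hbound⟩ := statement6_general (E := EuclideanSpace ℝ (Fin N))
    (cNs N s / 2) (N + 2 * s) C₀ (inv_pos.2 (zero_lt_one.trans_le hc))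
  have hΦ : IsC11Deformation (Ioo (-(1/2)) (1/2)) c⁻¹ C₀ Φ V :=
    ⟨hlow, fun t ht => ⟨hdiffx t ht, hDbound t ht, hDlip t ht⟩,
      fun t ht => ⟨hVdiff t ht, hDVbound t ht, hDVlip t ht⟩,
      fun x t ht => (hderivt x t ht).hasDerivWithinAt,
      fun x t ht => (hderivtD x t ht).hasDerivWithinAt⟩
  refine ⟨C, hC, fun t ht ht0 y z hz => ?_⟩
  simpa only [oddPart, pullbackKernel, kappa, sub_zero, neg_add', sub_add_eq_sub_sub] using
    hbound _ (convex_Ioo _ _) Φ V hΦ t ht 0 (by norm_num) ht0 y z hz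
end
end

section
/- Let N ≥ 1 and s ∈ (0,1) with N > 2s, let x ∈ ℝ^N, and let ψ : ℝ^N → ℝ be smooth with compact support. In the case s = 1/2, fix β ∈ (0,1). Then the double integral ∬_{ℝ^N×ℝ^N} |ψ(y) − ψ(z)| · |y−z|^{−N−2s} · f_x(y,z) dy dz is finite, where f_x(y,z) := max(|x−y|^{2s−N}, |x−z|^{2s−N}) if 2s < 1; f_x(y,z) := |y−z| · max(|x−y|^{2s−N−1}, |x−z|^{2s−N−1}) if 2s > 1; and f_x(y,z) := |y−z|^β · max(|x−y|^{1−N−β}, |x−z|^{1−N−β}) if s = 1/2. -/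
open MeasureTheory
open scoped ENNReal

noncomputable section

/-!
Choosing `γ = 2s`, `2s - 1` or `1 - β`, the three regimes become one: up to the factor
`|ψ(y) - ψ(z)|`, the integrand is `|y - z|^(-N-γ) * max (|x - y|^(γ-N)) (|x - z|^(γ-N))` with
`0 < γ < 1`. The maximum is at most the sum of its two entries, and by symmetry only the one in `y`
has to be integrated. Integrating in `z` first gives a bounded function of `y`, since `ψ` is bounded
and Lipschitz and `γ < 1`, which moreover decays like `|x - y|^(-N-γ)`, since `ψ` has compact
support. Hence its product with `|x - y|^(γ-N)` is integrable. Both integrations reduce to the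
integrability of `|w|^α * (1 + |w|)^β` for `-N < α` and `α + β < -N`.
-/

open Module Metric Filter Asymptotics
open scoped NNReal

/-- The function `f_x(y, z)`, in dimension `N`, comparing the singularity of `|x - ·|^(2s-N)` with a
power of `|y - z|`. The parameter `β` only enters when `s = 1/2`, the case that remains when neither
`2s < 1` nor `1 < 2s`. A negative power of `0` is `0` here and not `+∞`, which only affects a null
set of pairs `(y, z)`. -/
def comparisonFunction {E : Type*} [NormedAddCommGroup E] (N s β : ℝ) (x y z : E) : ℝ :=
  if 2 * s < 1 then max (‖x - y‖ ^ (2 * s - N)) (‖x - z‖ ^ (2 * s - N))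
  else if 1 < 2 * s then
    ‖y - z‖ * max (‖x - y‖ ^ (2 * s - N - 1)) (‖x - z‖ ^ (2 * s - N - 1))
  else ‖y - z‖ ^ β * max (‖x - y‖ ^ (1 - N - β)) (‖x - z‖ ^ (1 - N - β))

lemma exists_comparisonFunction_eq {E : Type*} [NormedAddCommGroup E] (N : ℝ) {s β : ℝ}
    (hs : s ∈ Set.Ioo (0 : ℝ) 1) (hβ : s = 1 / 2 → β ∈ Set.Ioo (0 : ℝ) 1) :
    ∃ γ ∈ Set.Ioo (0 : ℝ) 1, ∀ x y z : E, comparisonFunction N s β x y z =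
      ‖y - z‖ ^ (2 * s - γ) * max (‖x - y‖ ^ (γ - N)) (‖x - z‖ ^ (γ - N)) := by
  obtain ⟨hs0, hs1⟩ := hs
  rcases lt_trichotomy (2 * s) 1 with h | h | h
  · refine ⟨2 * s, ⟨by linarith, h⟩, fun x y z => ?_⟩
    simp [comparisonFunction, h]
  · obtain ⟨hβ0, hβ1⟩ := hβ (by linarith)
    refine ⟨1 - β, ⟨by linarith, by linarith⟩, fun x y z => ?_⟩
    simp [comparisonFunction, h, sub_right_comm]
  · refine ⟨2 * s - 1, ⟨by linarith, by linarith⟩, fun x y z => ?_⟩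
    simp [comparisonFunction, h, h.not_gt, sub_right_comm]

lemma norm_sub_mul_rpow_mul_rpow {E F : Type*} [NormedAddCommGroup E] [NormedAddCommGroup F]
    (ψ : E → F) (y z : E) (p a : ℝ) :
    ‖ψ y - ψ z‖ * ‖y - z‖ ^ p * ‖y - z‖ ^ a = ‖ψ y - ψ z‖ * ‖y - z‖ ^ (p + a) := by
  rcases eq_or_ne y z with rfl | hyz
  · simp
  · rw [Real.rpow_add (norm_sub_pos_iff.2 hyz), mul_assoc]

lemma rpow_le_rpow_neg_mul_rpow {a b c p : ℝ} (ha : 0 < a) (hc : 0 < c) (habc : a ≤ c * b)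
    (hp : p ≤ 0) : b ^ p ≤ c ^ (-p) * a ^ p :=
  calc b ^ p ≤ (a / c) ^ p :=
        Real.rpow_le_rpow_of_nonpos (div_pos ha hc) ((div_le_iff₀' hc).2 habc) hp
    _ = c ^ (-p) * a ^ p := by
      rw [Real.div_rpow ha.le hc.le, Real.rpow_neg hc.le, div_eq_inv_mul]

lemma exists_norm_sub_le_rpow_mul_one_add_rpow {E F : Type*} [NormedAddCommGroup E]
    [NormedAddCommGroup F] {C r : ℝ≥0} {ψ : E → F} (hψ : HolderWith C r ψ) {M : ℝ}
    (hM : ∀ y, ‖ψ y‖ ≤ M) :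
    ∃ K, ∀ y z, ‖ψ y - ψ z‖ ≤ K * (‖y - z‖ ^ (r : ℝ) * (1 + ‖y - z‖) ^ (-r : ℝ)) := by
  refine ⟨2 ^ (r : ℝ) * (C + 2 * M), fun y z => ?_⟩
  set t := ‖y - z‖
  have ht0 : 0 ≤ t := norm_nonneg _
  have hholder : ‖ψ y - ψ z‖ ≤ C * t ^ (r : ℝ) := by
    simpa only [dist_eq_norm] using hψ.dist_le y z
  have hbdd : ‖ψ y - ψ z‖ ≤ 2 * M := (norm_sub_le _ _).trans (by linarith [hM y, hM z])
  have hweight : (1 + t) ^ (r : ℝ) ≤ 2 ^ (r : ℝ) * (1 + t ^ (r : ℝ)) :=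
    calc (1 + t) ^ (r : ℝ) ≤ (2 * max 1 t) ^ (r : ℝ) := by
          gcongr
          linarith [le_max_left 1 t, le_max_right 1 t]
      _ = 2 ^ (r : ℝ) * max 1 t ^ (r : ℝ) := Real.mul_rpow (by positivity) (by positivity)
      _ ≤ 2 ^ (r : ℝ) * (1 + t ^ (r : ℝ)) := by
          gcongr
          rcases max_choice 1 t with h | h <;> rw [h]
          · linarith [Real.one_rpow (r : ℝ), Real.rpow_nonneg ht0 r]
          · linarith
  rw [Real.rpow_neg (by positivity), ← div_eq_mul_inv, ← mul_div_assoc, le_div_iff₀ (by positivity)]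
  calc ‖ψ y - ψ z‖ * (1 + t) ^ (r : ℝ)
      ≤ ‖ψ y - ψ z‖ * (2 ^ (r : ℝ) * (1 + t ^ (r : ℝ))) := by gcongr
    _ = 2 ^ (r : ℝ) * (‖ψ y - ψ z‖ + ‖ψ y - ψ z‖ * t ^ (r : ℝ)) := by ring
    _ ≤ 2 ^ (r : ℝ) * (C * t ^ (r : ℝ) + 2 * M * t ^ (r : ℝ)) := by gcongr
    _ = 2 ^ (r : ℝ) * (C + 2 * M) * t ^ (r : ℝ) := by ring

lemma isEquivalent_norm_one_add_norm {E : Type*} [NormedAddCommGroup E] [ProperSpace E] :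
    (fun w : E => ‖w‖) ~[cocompact E] fun w => 1 + ‖w‖ :=
  (((isLittleO_const_id_atTop (1 : ℝ)).comp_tendsto
    (tendsto_norm_cocompact_atTop (E := E))).add_isEquivalent .refl).symm

/-- The integral `∫ |ψ y - ψ z| |y - z|^p dz` of the weighted oscillation of `ψ` around `y`. It is
taken in `ℝ≥0∞`, so that it may be infinite. -/
def nonlocalVariation {E F : Type*} [NormedAddCommGroup E] [MeasurableSpace E]
    [NormedAddCommGroup F] (μ : Measure E) (p : ℝ) (ψ : E → F) (y : E) : ℝ≥0∞ :=
  ∫⁻ z, ENNReal.ofReal (‖ψ y - ψ z‖ * ‖y - z‖ ^ p) ∂μ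

lemma nonlocalVariation_le_of_two_mul_lt {E F : Type*} [NormedAddCommGroup E] [MeasurableSpace E]
    [NormedAddCommGroup F] {μ : Measure E} {ψ : E → F} {x y : E} {M R p : ℝ} (hp : p ≤ 0)
    (hM : ∀ z, ‖ψ z‖ ≤ M) (hsupp : Function.support ψ ⊆ closedBall x R)
    (hy : 2 * R < ‖x - y‖) :
    nonlocalVariation μ p ψ y ≤ ENNReal.ofReal (M * (‖x - y‖ / 2) ^ p) * μ (closedBall x R) := by
  have hM0 : 0 ≤ M := (norm_nonneg _).trans (hM x)
  have hψy : ψ y = 0 := by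
    by_contra hy0
    have hxy : ‖x - y‖ ≤ R := by simpa [dist_eq_norm, norm_sub_rev] using hsupp hy0
    linarith [norm_nonneg (x - y)]
  refine le_trans (lintegral_mono fun z => ?_) (lintegral_indicator_const_le (closedBall x R) _)
  by_cases hz : z ∈ closedBall x R
  · rw [Set.indicator_of_mem hz, hψy, zero_sub, norm_neg]
    have hxz : ‖x - z‖ ≤ R := by simpa [dist_eq_norm, norm_sub_rev] using hz
    have hyz : ‖x - y‖ / 2 ≤ ‖y - z‖ := by
      linarith [norm_sub_le_norm_sub_add_norm_sub x z y, norm_sub_rev y z]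
    have hpow : ‖y - z‖ ^ p ≤ (‖x - y‖ / 2) ^ p :=
      Real.rpow_le_rpow_of_nonpos (by linarith [norm_nonneg (x - z)]) hyz hp
    gcongr
    exact hM z
  · have hψz : ψ z = 0 := by_contra fun h => hz (hsupp h)
    simp [hψy, hψz]

variable {E F : Type*} [NormedAddCommGroup E] [NormedSpace ℝ E] [FiniteDimensional ℝ E]
  [Nontrivial E] [MeasurableSpace E] [BorelSpace E] [NormedAddCommGroup F] {μ : Measure E}

lemma integrable_norm_rpow_mul_one_add_norm_rpow [μ.IsAddHaarMeasure] {α β : ℝ}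
    (hα : -(finrank ℝ E : ℝ) < α) (hαβ : α + β < -(finrank ℝ E : ℝ)) :
    Integrable (fun w : E => ‖w‖ ^ α * (1 + ‖w‖) ^ β) μ := by
  have hlocal : LocallyIntegrable (fun w : E => ‖w‖ ^ α * (1 + ‖w‖) ^ β) μ := by
    refine locallyIntegrable_of_norm_le_rpow (C := 1) (α := -α) finrank_pos (by linarith)
      (.of_forall fun w => ?_) (by fun_prop)
    have hle : (1 + ‖w‖) ^ β ≤ 1 :=
      Real.rpow_le_one_of_one_le_of_nonpos (by linarith [norm_nonneg w]) (by linarith)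
    rw [Real.norm_of_nonneg (by positivity), neg_neg, one_mul]
    exact mul_le_of_le_one_right (by positivity) hle
  have hdecay : (fun w : E => ‖w‖ ^ α * (1 + ‖w‖) ^ β)
      =O[cocompact E] fun w => (1 + ‖w‖) ^ (α + β) := by
    have hnorm : (fun w : E => ‖w‖ ^ α) =O[cocompact E] fun w => (1 + ‖w‖) ^ α :=
      (isEquivalent_norm_one_add_norm.rpow fun w => by positivity).isBigO
    refine (hnorm.mul (isBigO_refl (fun w : E => (1 + ‖w‖) ^ β) _)).congr_right fun w => ?_
    exact (Real.rpow_add (by positivity) α β).symm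
  have hbracket : Integrable (fun w : E => (1 + ‖w‖) ^ (α + β)) μ := by
    simpa only [neg_neg] using integrable_one_add_norm (μ := μ) (r := -(α + β)) (by linarith)
  exact hlocal.integrable_of_isBigO_cocompact hdecay (hbracket.integrableAtFilter _)

lemma exists_nonlocalVariation_le [μ.IsAddHaarMeasure] {C r : ℝ≥0} {ψ : E → F}
    (hψ : HolderWith C r ψ) {M p : ℝ} (hM : ∀ y, ‖ψ y‖ ≤ M)
    (hp : p < -(finrank ℝ E : ℝ)) (hpr : -(finrank ℝ E : ℝ) < p + r) :
    ∃ A ≠ ∞, ∀ y, nonlocalVariation μ p ψ y ≤ A := by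
  obtain ⟨K, hK⟩ := exists_norm_sub_le_rpow_mul_one_add_rpow hψ hM
  have hint : Integrable (fun w : E => K * (‖w‖ ^ (p + r) * (1 + ‖w‖) ^ (-r : ℝ))) μ :=
    (integrable_norm_rpow_mul_one_add_norm_rpow hpr (by simpa using hp)).const_mul K
  refine ⟨_, hint.lintegral_lt_top.ne, fun y => ?_⟩
  rw [← lintegral_sub_left_eq_self _ y]
  refine lintegral_mono fun z => ?_
  rcases eq_or_ne y z with rfl | hyz
  · simp
  refine ENNReal.ofReal_le_ofReal ?_
  calc ‖ψ y - ψ z‖ * ‖y - z‖ ^ p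
      ≤ K * (‖y - z‖ ^ (r : ℝ) * (1 + ‖y - z‖) ^ (-r : ℝ)) * ‖y - z‖ ^ p := by
        gcongr; exact hK y z
    _ = K * (‖y - z‖ ^ (p + r) * (1 + ‖y - z‖) ^ (-r : ℝ)) := by
      rw [Real.rpow_add (norm_sub_pos_iff.2 hyz)]; ring

lemma exists_nonlocalVariation_le_one_add_norm_rpow [μ.IsAddHaarMeasure] {C r : ℝ≥0} {ψ : E → F}
    (hψ : HolderWith C r ψ) (hψc : HasCompactSupport ψ) {p : ℝ}
    (hp : p < -(finrank ℝ E : ℝ)) (hpr : -(finrank ℝ E : ℝ) < p + r) (x : E) :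
    ∃ K ≠ ∞, ∀ y, nonlocalVariation μ p ψ y ≤ K * ENNReal.ofReal ((1 + ‖x - y‖) ^ p) := by
  have hr : 0 < r := NNReal.coe_pos.1 (by linarith)
  have hp0 : p ≤ 0 := by linarith [(finrank ℝ E).cast_nonneg (α := ℝ)]
  obtain ⟨M, hM⟩ := hψc.exists_bound_of_continuous (hψ.continuous hr)
  obtain ⟨R, hR, hsupp⟩ := hψc.isBounded.subset_closedBall_lt 1 x
  obtain ⟨A, hA, hbdd⟩ := exists_nonlocalVariation_le (μ := μ) hψ hM hp hpr
  refine ⟨A * ENNReal.ofReal ((1 + 2 * R) ^ (-p)) +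
    ENNReal.ofReal (M * 4 ^ (-p)) * μ (closedBall x R), ?_, fun y => ?_⟩
  · exact ENNReal.add_ne_top.2 ⟨ENNReal.mul_ne_top hA ENNReal.ofReal_ne_top,
      ENNReal.mul_ne_top ENNReal.ofReal_ne_top measure_closedBall_lt_top.ne⟩
  have hM0 : 0 ≤ M := (norm_nonneg _).trans (hM x)
  have hpos : 0 < 1 + ‖x - y‖ := by positivity
  rw [add_mul]
  rcases le_or_gt ‖x - y‖ (2 * R) with hy | hy
  · have hweight : 1 ≤ (1 + 2 * R) ^ (-p) * (1 + ‖x - y‖) ^ p := by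
      simpa only [Real.one_rpow] using
        rpow_le_rpow_neg_mul_rpow hpos (b := 1) (c := 1 + 2 * R) (by linarith) (by linarith) hp0
    refine le_add_right ((hbdd y).trans ?_)
    rw [mul_assoc, ← ENNReal.ofReal_mul (by positivity)]
    exact le_mul_of_one_le_right' (ENNReal.one_le_ofReal.2 hweight)
  · have hweight : (‖x - y‖ / 2) ^ p ≤ 4 ^ (-p) * (1 + ‖x - y‖) ^ p :=
      rpow_le_rpow_neg_mul_rpow hpos (by norm_num) (by linarith) hp0
    refine le_add_left ((nonlocalVariation_le_of_two_mul_lt hp0 hM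
      ((subset_tsupport ψ).trans hsupp) hy).trans ?_)
    rw [mul_right_comm, ← ENNReal.ofReal_mul (by positivity), mul_assoc]
    gcongr

lemma lintegral_norm_sub_mul_rpow_mul_rpow_lt_top [μ.IsAddHaarMeasure] {C r : ℝ≥0} {ψ : E → F}
    (hψ : HolderWith C r ψ) (hψc : HasCompactSupport ψ) {p q : ℝ}
    (hp : p < -(finrank ℝ E : ℝ)) (hpr : -(finrank ℝ E : ℝ) < p + r)
    (hq : -(finrank ℝ E : ℝ) < q) (hqp : q + p < -(finrank ℝ E : ℝ)) (x : E) :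
    ∫⁻ a : E × E, ENNReal.ofReal (‖ψ a.1 - ψ a.2‖ * ‖a.1 - a.2‖ ^ p * ‖x - a.1‖ ^ q)
      ∂(μ.prod μ) < ∞ := by
  obtain ⟨K, hK, hdecay⟩ := exists_nonlocalVariation_le_one_add_norm_rpow (μ := μ) hψ hψc hp hpr x
  calc ∫⁻ a : E × E, ENNReal.ofReal (‖ψ a.1 - ψ a.2‖ * ‖a.1 - a.2‖ ^ p * ‖x - a.1‖ ^ q) ∂(μ.prod μ)
      ≤ ∫⁻ y, ∫⁻ z, ENNReal.ofReal (‖ψ y - ψ z‖ * ‖y - z‖ ^ p * ‖x - y‖ ^ q) ∂μ ∂μ :=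
        lintegral_prod_le _
    _ = ∫⁻ y, nonlocalVariation μ p ψ y * ENNReal.ofReal (‖x - y‖ ^ q) ∂μ := by
      congr with y
      rw [nonlocalVariation, ← lintegral_mul_const' _ _ (by finiteness)]
      congr with z
      exact ENNReal.ofReal_mul (by positivity)
    _ ≤ ∫⁻ y, K * ENNReal.ofReal (‖x - y‖ ^ q * (1 + ‖x - y‖) ^ p) ∂μ := by
      refine lintegral_mono fun y => ?_
      rw [ENNReal.ofReal_mul (by positivity), mul_comm (ENNReal.ofReal _), ← mul_assoc]
      gcongr
      exact hdecay y
    _ = K * ∫⁻ w : E, ENNReal.ofReal (‖w‖ ^ q * (1 + ‖w‖) ^ p) ∂μ := by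
      rw [lintegral_const_mul' _ _ hK, lintegral_sub_left_eq_self
        (fun w : E => ENNReal.ofReal (‖w‖ ^ q * (1 + ‖w‖) ^ p))]
    _ < ∞ := ENNReal.mul_lt_top hK.lt_top
      (integrable_norm_rpow_mul_one_add_norm_rpow hq hqp).lintegral_lt_top

lemma lintegral_norm_sub_mul_rpow_mul_max_lt_top [μ.IsAddHaarMeasure] {C r : ℝ≥0} {ψ : E → F}
    (hψ : HolderWith C r ψ) (hψc : HasCompactSupport ψ) {p q : ℝ}
    (hp : p < -(finrank ℝ E : ℝ)) (hpr : -(finrank ℝ E : ℝ) < p + r)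
    (hq : -(finrank ℝ E : ℝ) < q) (hqp : q + p < -(finrank ℝ E : ℝ)) (x : E) :
    ∫⁻ a : E × E, ENNReal.ofReal (‖ψ a.1 - ψ a.2‖ * ‖a.1 - a.2‖ ^ p *
      max (‖x - a.1‖ ^ q) (‖x - a.2‖ ^ q)) ∂(μ.prod μ) < ∞ := by
  set f : E × E → ℝ≥0∞ := fun a =>
    ENNReal.ofReal (‖ψ a.1 - ψ a.2‖ * ‖a.1 - a.2‖ ^ p * ‖x - a.1‖ ^ q)
  have hf : ∫⁻ a, f a ∂(μ.prod μ) < ∞ :=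
    lintegral_norm_sub_mul_rpow_mul_rpow_lt_top hψ hψc hp hpr hq hqp x
  have hr : 0 < r := NNReal.coe_pos.1 (by linarith)
  have hf_meas : Measurable f := by
    have hcont := hψ.continuous hr
    have hosc : Measurable fun a : E × E => ‖ψ a.1 - ψ a.2‖ :=
      Continuous.measurable (by fun_prop)
    fun_prop
  calc _ ≤ ∫⁻ a, f a + f a.swap ∂(μ.prod μ) := by
        refine lintegral_mono fun a => ?_
        simp only [f, Prod.fst_swap, Prod.snd_swap, norm_sub_rev (ψ a.2), norm_sub_rev a.2]
        rw [← ENNReal.ofReal_add (by positivity) (by positivity), ← mul_add]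
        gcongr
        exact max_le_add_of_nonneg (by positivity) (by positivity)
    _ = ∫⁻ a, f a ∂(μ.prod μ) + ∫⁻ a, f a ∂(μ.prod μ) := by
      rw [lintegral_add_left hf_meas, lintegral_prod_swap]
    _ < ∞ := ENNReal.add_lt_top.2 ⟨hf, hf⟩

theorem statement9_general [μ.IsAddHaarMeasure] {s β : ℝ} (hs : s ∈ Set.Ioo (0 : ℝ) 1)
    (hβ : s = 1 / 2 → β ∈ Set.Ioo (0 : ℝ) 1) {C : ℝ≥0} {ψ : E → F} (hψ : LipschitzWith C ψ)
    (hψc : HasCompactSupport ψ) (x : E) :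
    ∫⁻ a : E × E, ENNReal.ofReal (‖ψ a.1 - ψ a.2‖ * ‖a.1 - a.2‖ ^ (-(finrank ℝ E : ℝ) - 2 * s) *
      comparisonFunction (finrank ℝ E) s β x a.1 a.2) ∂(μ.prod μ) < ∞ := by
  obtain ⟨γ, ⟨hγ0, hγ1⟩, hγ⟩ := exists_comparisonFunction_eq (E := E) (finrank ℝ E) hs hβ
  have hd : (0 : ℝ) < finrank ℝ E := Nat.cast_pos.2 finrank_pos
  have hexp : -(finrank ℝ E : ℝ) - 2 * s + (2 * s - γ) = -(finrank ℝ E : ℝ) - γ := by ring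
  simp only [hγ, ← mul_assoc, norm_sub_mul_rpow_mul_rpow, hexp]
  exact lintegral_norm_sub_mul_rpow_mul_max_lt_top (holderWith_one.2 hψ) hψc (by linarith)
    (by rw [NNReal.coe_one]; linarith) (by linarith) (by linarith) x

/-- The double integral
`∬ |ψ(y)-ψ(z)| |y-z|^{-N-2s} f_x(y,z) dy dz` is finite, where `f_x` is the
comparison function from the three regimes `2s < 1`, `2s > 1`, `s = 1/2`. -/
theorem statement9 (N : ℕ) (hN : 1 ≤ N) (s : ℝ) (hs : s ∈ Set.Ioo (0 : ℝ) 1)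
    (hNs : 2 * s < N) (x : EuclideanSpace ℝ (Fin N))
    (ψ : EuclideanSpace ℝ (Fin N) → ℝ) (hψ : ContDiff ℝ (⊤ : ℕ∞) ψ)
    (hψc : HasCompactSupport ψ)
    (β : ℝ) (hβ : β ∈ Set.Ioo (0 : ℝ) 1) :
    (∫⁻ p : EuclideanSpace ℝ (Fin N) × EuclideanSpace ℝ (Fin N),
      ENNReal.ofReal
        (|ψ p.1 - ψ p.2| * ‖p.1 - p.2‖ ^ (-(N : ℝ) - 2 * s) *
          (if 2 * s < 1 then
              max (‖x - p.1‖ ^ (2 * s - (N : ℝ))) (‖x - p.2‖ ^ (2 * s - (N : ℝ)))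
            else if 1 < 2 * s then
              ‖p.1 - p.2‖ *
                max (‖x - p.1‖ ^ (2 * s - (N : ℝ) - 1)) (‖x - p.2‖ ^ (2 * s - (N : ℝ) - 1))
            else
              ‖p.1 - p.2‖ ^ β *
                max (‖x - p.1‖ ^ (1 - (N : ℝ) - β)) (‖x - p.2‖ ^ (1 - (N : ℝ) - β))))) < ⊤ := by
  have : Nonempty (Fin N) := ⟨⟨0, hN⟩⟩
  obtain ⟨C, hC⟩ := hψ.lipschitzWith_of_hasCompactSupport hψc (by simp)
  simpa only [comparisonFunction, finrank_euclideanSpace_fin, Real.norm_eq_abs,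
    Measure.volume_eq_prod] using
    statement9_general (μ := volume) hs (fun _ => hβ) hC hψc x
end
end

section
/- Let N ≥ 1 and s ∈ (0,1). Let A be an N×N real matrix and let w, v : ℝ^N → ℝ be smooth with compact support. Define the kernel ω_A(y,z) := (c_{N,s}/2) · [ 2·tr(A) − (N+2s) · ((A(y−z)) · (y−z)) / |y−z|² ] for y ≠ z. Then the double integral ∬_{ℝ^N×ℝ^N} (w(y) − w(z)) (v(y) − v(z)) · |y−z|^{−N−2s} · ω_A(y,z) dy dz is absolutely convergent and equals − ∫_{ℝ^N} (∇w(z) · (Az)) · (−Δ)^s v(z) dz − ∫_{ℝ^N} (∇v(z) · (Az)) · (−Δ)^s w(z) dz. -/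
/-!
The identity is the infinitesimal form of a linear change of variables. The flow `exp (t • A)`,
applied to both variables, multiplies Lebesgue measure on `ℝ^N × ℝ^N` by `exp (2 * t * tr A)`, so
the integral of the derivative of `f (y, z) = (w y - w z) * (v y - v z) * ‖y - z‖ ^ (-N - 2s)` along
this flow equals `-2 * tr A * ∫ f`. That derivative has three terms: differentiating the kernel
gives, together with the trace, the weight `ω_A`; differentiating `w` and `v` gives Gagliardo forms
of `∇w · Az` with `v` and of `w` with `∇v · Az`. The kernel is singular only on the diagonal, which
the flow preserves and where `f` vanishes. Finally, the substitution `y = z + h` and a translation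
at each fixed `h` turn a Gagliardo form into a pairing with the fractional Laplacian.
-/

open MeasureTheory
open scoped RealInnerProductSpace

noncomputable section

/-- The fractional Laplacian, defined pointwise by
`(-Δ)^s u(x) = (c_{N,s}/2) ∫ (2u(x) - u(x+z) - u(x-z)) |z|^{-N-2s} dz`. -/
def fracLap (N : ℕ) (s : ℝ) (u : EuclideanSpace ℝ (Fin N) → ℝ)
    (x : EuclideanSpace ℝ (Fin N)) : ℝ :=
  cNs N s / 2 * ∫ z : EuclideanSpace ℝ (Fin N),
    (2 * u x - u (x + z) - u (x - z)) * ‖z‖ ^ (-(N : ℝ) - 2 * s)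

/-- The kernel `ω_A(y,z) = (c_{N,s}/2) [2 tr A - (N+2s) ⟨A(y-z), y-z⟩ / |y-z|²]`. -/
def omegaA (N : ℕ) (s : ℝ) (A : Matrix (Fin N) (Fin N) ℝ)
    (y z : EuclideanSpace ℝ (Fin N)) : ℝ :=
  cNs N s / 2 * (2 * A.trace -
    ((N : ℝ) + 2 * s) * ⟪Matrix.toEuclideanLin A (y - z), y - z⟫ / ‖y - z‖ ^ 2)

section LiouvilleFormula

lemma hasDerivAt_matrix_det {𝕜 n : Type*} [NontriviallyNormedField 𝕜] [Fintype n] [DecidableEq n]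
    {M : 𝕜 → Matrix n n 𝕜} {M' : Matrix n n 𝕜} {t : 𝕜}
    (hM : ∀ i j, HasDerivAt (fun r => M r i j) (M' i j) t) :
    HasDerivAt (fun r => (M r).det) ((M t).adjugate * M').trace t := by
  let det : ContinuousMultilinearMap 𝕜 (fun _ : n => n → 𝕜) 𝕜 :=
    { Matrix.detRowAlternating.toMultilinearMap with cont := continuous_id.matrix_det }
  have hrows : HasDerivAt (fun r i j => M r i j) (fun i j => M' i j) t :=
    hasDerivAt_pi.2 fun i => hasDerivAt_pi.2 (hM i)
  refine ((det.hasFDerivAt (M t)).comp_hasDerivAt t hrows).congr_deriv ?_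
  calc det.linearDeriv (M t) M' = ∑ i, ((M t).updateRow i (M' i)).det :=
        det.linearDeriv_apply (M t) M'
    _ = ∑ i, ((M t).adjugate.transpose.mulVec (M' i)) i := by
        simp only [← Matrix.cramer_transpose_apply, Matrix.cramer_eq_adjugate_mulVec,
          Matrix.adjugate_transpose]
    _ = ((M t).adjugate * M').trace := by
        rw [Matrix.trace_mul_comm]
        simp only [Matrix.trace, Matrix.diag_apply, Matrix.mul_apply, Matrix.mulVec, dotProduct,
          Matrix.transpose_apply, mul_comm]

variable {E : Type*} [NormedAddCommGroup E] [NormedSpace ℝ E] [FiniteDimensional ℝ E]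

lemma hasDerivAt_det_of_hasDerivAt_mul {T : ℝ → E →L[ℝ] E} {L : E →L[ℝ] E} {t : ℝ}
    (hT : HasDerivAt T (T t * L) t) :
    HasDerivAt (fun r => (T r).det) ((T t).det * LinearMap.trace ℝ E L) t := by
  let b := Module.finBasis ℝ E
  let toMat (S : E →L[ℝ] E) := LinearMap.toMatrix b b S.toLinearMap
  have hentry (i j) : HasDerivAt (fun r => toMat (T r) i j) (toMat (T t * L) i j) t := by
    have hcol : HasDerivAt (fun r => T r (b j)) ((T t * L) (b j)) t := by
      simpa using hT.clm_apply (hasDerivAt_const t (b j))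
    simpa [toMat, LinearMap.toMatrix_apply] using!
      (b.coord i).toContinuousLinearMap.hasFDerivAt.comp_hasDerivAt t hcol
  have hdet (S : E →L[ℝ] E) : (toMat S).det = S.det := LinearMap.det_toMatrix b _
  have hmul : toMat (T t * L) = toMat (T t) * toMat L := LinearMap.toMatrix_mul b _ _
  have h := hasDerivAt_matrix_det hentry
  simp only [hmul, ← Matrix.mul_assoc, Matrix.adjugate_mul, Matrix.smul_mul, Matrix.one_mul,
    Matrix.trace_smul, hdet, smul_eq_mul] at h
  rwa [LinearMap.trace_eq_matrix_trace ℝ b]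

lemma det_exp (L : E →L[ℝ] E) :
    (NormedSpace.exp L).det = Real.exp (LinearMap.trace ℝ E L) := by
  set τ := LinearMap.trace ℝ E L
  let d (t : ℝ) := (NormedSpace.exp (t • L)).det
  have hd (t) : HasDerivAt d (d t * τ) t :=
    hasDerivAt_det_of_hasDerivAt_mul (hasDerivAt_exp_smul_const L t)
  have hconst (t) : HasDerivAt (fun t => d t * Real.exp (-(t * τ))) 0 t := by
    refine ((hd t).mul ((hasDerivAt_id t).mul_const τ).neg.exp).congr_deriv ?_
    simp only [id, one_mul]
    ring
  have h : d 1 * Real.exp (-(1 * τ)) = d 0 * Real.exp (-(0 * τ)) :=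
    is_const_of_deriv_eq_zero (fun t => (hconst t).differentiableAt) (fun t => (hconst t).deriv) 1 0
  have hd0 : d 0 = 1 := by simp [d, ContinuousLinearMap.det]
  have hd1 : d 1 = (NormedSpace.exp L).det := by simp only [d, one_smul]
  rw [hd0, hd1, one_mul, one_mul, zero_mul, neg_zero, Real.exp_zero, Real.exp_neg] at h
  exact (mul_inv_eq_one₀ (Real.exp_ne_zero τ)).1 h

end LiouvilleFormula

section ExpFlow

lemma exp_prodMap {E F : Type*} [NormedAddCommGroup E] [NormedSpace ℝ E] [CompleteSpace E]
    [NormedAddCommGroup F] [NormedSpace ℝ F] [CompleteSpace F] (L : E →L[ℝ] E) (M : F →L[ℝ] F) :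
    NormedSpace.exp (L.prodMap M) = (NormedSpace.exp L).prodMap (NormedSpace.exp M) := by
  let _ : NormedAlgebra ℚ (E →L[ℝ] E) := .restrictScalars ℚ ℝ _
  let _ : NormedAlgebra ℚ (F →L[ℝ] F) := .restrictScalars ℚ ℝ _
  let _ : NormedAlgebra ℚ (E × F →L[ℝ] E × F) := .restrictScalars ℚ ℝ _
  let prodMapHom : (E →L[ℝ] E) × (F →L[ℝ] F) →+* (E × F →L[ℝ] E × F) :=
    { toFun := ContinuousLinearMap.prodMapL ℝ E E F F
      map_one' := rfl
      map_mul' := fun _ _ => rfl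
      map_zero' := rfl
      map_add' := map_add _ }
  have h :=
    NormedSpace.map_exp prodMapHom (ContinuousLinearMap.prodMapL ℝ E E F F).continuous (L, M)
  rw [show NormedSpace.exp (L, M) = (NormedSpace.exp L, NormedSpace.exp M) from
    Prod.ext (Prod.fst_exp _) (Prod.snd_exp _)] at h
  exact h.symm

lemma exp_add_smul_apply {E : Type*} [NormedAddCommGroup E] [NormedSpace ℝ E] [CompleteSpace E]
    (L : E →L[ℝ] E) (s t : ℝ) (x : E) :
    NormedSpace.exp ((s + t) • L) x = NormedSpace.exp (s • L) (NormedSpace.exp (t • L) x) := by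
  let _ : NormedAlgebra ℚ (E →L[ℝ] E) := .restrictScalars ℚ ℝ _
  have hcomm : Commute (s • L) (t • L) := ((Commute.refl L).smul_left s).smul_right t
  rw [add_smul, NormedSpace.exp_add_of_commute hcomm, mul_apply_eq_comp]

/-- The derivative of `u` along the linear vector field `x ↦ L x`, that is, along the flow
`t ↦ exp (t • L)`. -/
def flowDeriv {E F : Type*} [NormedAddCommGroup E] [NormedSpace ℝ E] [NormedAddCommGroup F]
    [NormedSpace ℝ F] (L : E →L[ℝ] E) (u : E → F) (x : E) : F :=
  fderiv ℝ u x (L x)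

variable {E F : Type*} [NormedAddCommGroup E] [NormedSpace ℝ E]
  [NormedAddCommGroup F] [NormedSpace ℝ F] {L : E →L[ℝ] E} {u : E → F}

lemma hasDerivAt_comp_exp_smul_zero [CompleteSpace E] {x : E} (hu : DifferentiableAt ℝ u x) :
    HasDerivAt (fun t : ℝ => u (NormedSpace.exp (t • L) x)) (flowDeriv L u x) 0 := by
  have hcurve : HasDerivAt (fun t : ℝ => NormedSpace.exp (t • L) x) (L x) 0 := by
    simpa using (hasDerivAt_exp_smul_const (𝕂 := ℝ) L 0).clm_apply (hasDerivAt_const 0 x)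
  exact hu.hasFDerivAt.comp_hasDerivAt_of_eq 0 hcurve (by simp)

lemma contDiff_flowDeriv {m n : WithTop ℕ∞} (hu : ContDiff ℝ n u) (hmn : m + 1 ≤ n) :
    ContDiff ℝ m (flowDeriv L u) :=
  (hu.fderiv_right hmn).clm_apply L.contDiff

lemma hasCompactSupport_flowDeriv (hu : HasCompactSupport u) :
    HasCompactSupport (flowDeriv L u) :=
  (hu.fderiv ℝ).mono fun x hx h => hx (by simp [flowDeriv, h])

end ExpFlow

section FlowPullback

variable {E G : Type*} [NormedAddCommGroup E] [NormedSpace ℝ E] [NormedAddCommGroup G]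
  [NormedSpace ℝ G] (L : E →L[ℝ] E)

/-- The pullback of `f` by the flow `exp (t • L)`, weighted by the Jacobian determinant of the flow
so that it has the same integral as `f`. -/
def flowPullback (f : E → G) (t : ℝ) (x : E) : G :=
  Real.exp (t * LinearMap.trace ℝ E L) • f (NormedSpace.exp (t • L) x)

lemma flowPullback_zero (f : E → G) : flowPullback L f 0 = f := by
  ext x
  simp [flowPullback]

lemma norm_flowPullback (f : E → G) (t : ℝ) (x : E) :
    ‖flowPullback L f t x‖ = flowPullback L (fun y => ‖f y‖) t x := by
  simp [flowPullback, norm_smul]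

lemma hasDerivAt_flowPullback [CompleteSpace E] {L : E →L[ℝ] E} {f f' : E → G} {x : E}
    (hf : ∀ y, HasDerivAt (fun t : ℝ => f (NormedSpace.exp (t • L) y)) (f' y) 0) (t : ℝ) :
    HasDerivAt (fun t => flowPullback L f t x)
      (flowPullback L (fun y => f' y + LinearMap.trace ℝ E L • f y) t x) t := by
  have hflow : HasDerivAt (fun r => f (NormedSpace.exp (r • L) x))
      (f' (NormedSpace.exp (t • L) x)) t := by
    have h := HasDerivAt.comp_sub_const t t (by simpa using hf (NormedSpace.exp (t • L) x))
    simpa only [← exp_add_smul_apply, sub_add_cancel] using h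
  have hweight := ((hasDerivAt_id t).mul_const (LinearMap.trace ℝ E L)).exp
  refine (hweight.smul hflow).congr_deriv ?_
  simp only [flowPullback, id, one_mul, smul_add, mul_smul]

end FlowPullback

section FlowIntegral

variable {E G : Type*} [NormedAddCommGroup E] [NormedSpace ℝ E] [FiniteDimensional ℝ E]
  [MeasurableSpace E] [BorelSpace E] {μ : Measure E} [μ.IsAddHaarMeasure]
  [NormedAddCommGroup G]

lemma map_exp_addHaar (L : E →L[ℝ] E) :
    μ.map (NormedSpace.exp L : E →L[ℝ] E) =
      ENNReal.ofReal (Real.exp (-LinearMap.trace ℝ E L)) • μ := by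
  have hdet : LinearMap.det (NormedSpace.exp L).toLinearMap = _ := det_exp L
  have h := Measure.map_linearMap_addHaar_eq_smul_addHaar μ
    (f := (NormedSpace.exp L).toLinearMap) (hdet.trans_ne (Real.exp_ne_zero _))
  rwa [hdet, ← Real.exp_neg, abs_of_pos (Real.exp_pos _)] at h

lemma measurableEmbedding_exp (L : E →L[ℝ] E) :
    MeasurableEmbedding (NormedSpace.exp L : E →L[ℝ] E) := by
  have hdet : LinearMap.det (NormedSpace.exp L).toLinearMap ≠ 0 :=
    (det_exp L).trans_ne (Real.exp_ne_zero _)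
  exact (NormedSpace.exp L).continuous.measurableEmbedding
    (LinearMap.equivOfDetNeZero _ hdet).injective

lemma quasiMeasurePreserving_exp_flow (L : E →L[ℝ] E) (ν : Measure ℝ) [SFinite ν] :
    Measure.QuasiMeasurePreserving (fun p : E × ℝ => NormedSpace.exp (p.2 • L) p.1)
      (μ.prod ν) μ := by
  have hcont : Continuous fun p : E × ℝ => NormedSpace.exp (p.2 • L) p.1 :=
    ((differentiable_exp_smul_const ℝ L).continuous.comp continuous_snd).clm_apply continuous_fst
  refine QuasiMeasurePreserving.prod_of_left hcont.measurable (.of_forall fun t => ?_)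
  exact Measure.ContinuousLinearMap.quasiMeasurePreserving μ _
    ((det_exp (t • L)).trans_ne (Real.exp_ne_zero _))

variable [NormedSpace ℝ G] (L : E →L[ℝ] E) {f f' : E → G}

lemma integral_flowPullback (f : E → G) (t : ℝ) :
    ∫ x, flowPullback L f t x ∂μ = ∫ x, f x ∂μ := by
  have htrace : LinearMap.trace ℝ E (t • L : E →L[ℝ] E) = t * LinearMap.trace ℝ E L := by simp
  simp only [flowPullback]
  rw [integral_smul, ← (measurableEmbedding_exp (t • L)).integral_map, map_exp_addHaar,
    integral_smul_measure, ENNReal.toReal_ofReal (Real.exp_nonneg _), htrace, smul_smul,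
    ← Real.exp_add, add_neg_cancel, Real.exp_zero, one_smul]

lemma integrable_flowPullback (hf : Integrable f μ) (t : ℝ) :
    Integrable (flowPullback L f t) μ := by
  refine Integrable.smul (Real.exp (t * LinearMap.trace ℝ E L))
    (f := f ∘ (NormedSpace.exp (t • L) : E →L[ℝ] E)) ?_
  rw [← (measurableEmbedding_exp (t • L)).integrable_map_iff, map_exp_addHaar]
  exact hf.smul_measure ENNReal.ofReal_ne_top

lemma integrable_flowPullback_prod (hf : Integrable f μ) (ν : Measure ℝ) [IsFiniteMeasure ν] :
    Integrable (fun p : E × ℝ => flowPullback L f p.2 p.1) (μ.prod ν) := by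
  have hweight : Continuous fun p : E × ℝ => Real.exp (p.2 * LinearMap.trace ℝ E L) := by fun_prop
  refine (integrable_prod_iff' (hweight.aestronglyMeasurable.smul
    (hf.1.comp_quasiMeasurePreserving (quasiMeasurePreserving_exp_flow L ν)))).2
    ⟨.of_forall fun t => integrable_flowPullback L hf t, ?_⟩
  change Integrable (fun t => ∫ x, ‖flowPullback L f t x‖ ∂μ) ν
  simpa only [norm_flowPullback, integral_flowPullback] using integrable_const _

variable {L}

/-- No domination uniform in `t` is required: integrating the derivative of the weighted pullbacks
of `f` over `t ∈ [0, 1]` and exchanging the integrals replaces differentiation under the integral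
sign. -/
theorem integral_flow_deriv [CompleteSpace G] (hf : Integrable f μ) (hf' : Integrable f' μ)
    (hderiv : ∀ x, HasDerivAt (fun t : ℝ => f (NormedSpace.exp (t • L) x)) (f' x) 0) :
    ∫ x, f' x ∂μ = -(LinearMap.trace ℝ E L • ∫ x, f x ∂μ) := by
  let g (x : E) : G := f' x + LinearMap.trace ℝ E L • f x
  let ν : Measure ℝ := volume.restrict (Set.Ioc 0 1)
  have hprod : Integrable (fun p : E × ℝ => flowPullback L g p.2 p.1) (μ.prod ν) :=
    integrable_flowPullback_prod L (hf'.add (hf.smul _)) ν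
  have hFTC : ∀ᵐ x ∂μ, ∫ t, flowPullback L g t x ∂ν = flowPullback L f 1 x - f x := by
    filter_upwards [hprod.prod_right_ae] with x hx
    have h := intervalIntegral.integral_eq_sub_of_hasDerivAt
      (fun t _ => hasDerivAt_flowPullback hderiv t)
      ((intervalIntegrable_iff_integrableOn_Ioc_of_le zero_le_one).2 hx)
    rwa [intervalIntegral.integral_of_le zero_le_one, flowPullback_zero] at h
  have hzero : ∫ x, g x ∂μ = 0 :=
    calc ∫ x, g x ∂μ = ∫ t, ∫ x, flowPullback L g t x ∂μ ∂ν := by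
          simp [integral_flowPullback, ν]
      _ = ∫ x, (flowPullback L f 1 x - f x) ∂μ := by
          rw [← integral_integral_swap hprod, integral_congr_ae hFTC]
      _ = 0 := by
          rw [integral_sub (integrable_flowPullback L hf 1) hf, integral_flowPullback, sub_self]
  have hsplit := integral_add hf' (hf.smul (LinearMap.trace ℝ E L))
  simp only [Pi.smul_apply, integral_smul] at hsplit
  exact eq_neg_of_add_eq_zero_left (hsplit.symm.trans hzero)

end FlowIntegral

section DifferenceBounds

variable {E F : Type*} [NormedAddCommGroup E] [NormedSpace ℝ E] [NormedAddCommGroup F]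
  [NormedSpace ℝ F] {φ ψ : E → F}

lemma exists_norm_sub_le_mul_min (hφ : ContDiff ℝ 1 φ) (hφc : HasCompactSupport φ) :
    ∃ C, 0 ≤ C ∧ ∀ y z, ‖φ y - φ z‖ ≤ C * min ‖y - z‖ 1 := by
  obtain ⟨K, hK⟩ := hφ.lipschitzWith_of_hasCompactSupport hφc one_ne_zero
  obtain ⟨B, hB⟩ := hφc.exists_bound_of_continuous hφ.continuous
  have hKC : (K : ℝ) ≤ max (K : ℝ) (2 * B) := le_max_left _ _
  refine ⟨max K (2 * B), K.coe_nonneg.trans hKC, fun y z => ?_⟩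
  rw [mul_min_of_nonneg _ _ (K.coe_nonneg.trans hKC), mul_one]
  refine le_min ((hK.norm_sub_le y z).trans (by gcongr)) (le_max_of_le_right ?_)
  linarith [norm_sub_le (φ y) (φ z), hB y, hB z]

lemma exists_norm_secondDiff_le_mul_min_sq (hψ : ContDiff ℝ 2 ψ) (hψc : HasCompactSupport ψ) :
    ∃ C, 0 ≤ C ∧ ∀ z h, ‖(2 : ℝ) • ψ z - ψ (z + h) - ψ (z - h)‖ ≤ C * min ‖h‖ 1 ^ 2 := by
  have hderiv : ContDiff ℝ 1 (fderiv ℝ ψ) := hψ.fderiv_right (by norm_num)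
  have hdiff : Differentiable ℝ ψ := hψ.differentiable (by norm_num)
  obtain ⟨C, hC0, hC⟩ := exists_norm_sub_le_mul_min hderiv (hψc.fderiv ℝ)
  obtain ⟨B, hB⟩ := hψc.exists_bound_of_continuous hψ.continuous
  refine ⟨max C (4 * B), le_max_of_le_left hC0, fun z h => ?_⟩
  rcases le_total ‖h‖ 1 with hh | hh
  · have hshift (x) : HasFDerivAt (fun x => ψ (x + h) - ψ x)
        (fderiv ℝ ψ (x + h) - fderiv ℝ ψ x) x :=
      ((hasFDerivAt_comp_add_right h).2 (hdiff (x + h)).hasFDerivAt).sub (hdiff x).hasFDerivAt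
    have hshift_le (x) : ‖fderiv ℝ ψ (x + h) - fderiv ℝ ψ x‖ ≤ C * ‖h‖ := by
      simpa only [add_sub_cancel_left, min_eq_left hh] using hC (x + h) x
    have hmean := convex_univ.norm_image_sub_le_of_norm_hasFDerivWithin_le
      (fun x _ => (hshift x).hasFDerivWithinAt) (fun x _ => hshift_le x)
      (Set.mem_univ z) (Set.mem_univ (z - h))
    calc ‖(2 : ℝ) • ψ z - ψ (z + h) - ψ (z - h)‖
        = ‖(ψ (z - h + h) - ψ (z - h)) - (ψ (z + h) - ψ z)‖ := by
          rw [sub_add_cancel, two_smul]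
          congr 1
          abel
      _ ≤ C * ‖h‖ * ‖z - h - z‖ := hmean
      _ = C * min ‖h‖ 1 ^ 2 := by rw [sub_sub_cancel_left, norm_neg, min_eq_left hh]; ring
      _ ≤ max C (4 * B) * min ‖h‖ 1 ^ 2 := by gcongr; exact le_max_left _ _
  · rw [min_eq_right hh, one_pow, mul_one]
    refine le_max_of_le_right ?_
    have htwo : ‖(2 : ℝ) • ψ z‖ = 2 * ‖ψ z‖ := by simp [norm_smul]
    linarith [norm_sub_le ((2 : ℝ) • ψ z - ψ (z + h)) (ψ (z - h)),
      norm_sub_le ((2 : ℝ) • ψ z) (ψ (z + h)), hB z, hB (z + h), hB (z - h)]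

end DifferenceBounds

section LevyKernel

variable {E : Type*} [NormedAddCommGroup E] [MeasurableSpace E]

/-- A (signed) Lévy kernel: the density of a measure that integrates `min ‖h‖ 1 ^ 2`. It need not be
even, and its value at `0` is arbitrary. -/
structure IsLevyKernel (K : E → ℝ) (μ : Measure E) : Prop where
  measurable : Measurable K
  integrable : Integrable (fun h => min ‖h‖ 1 ^ 2 * K h) μ

lemma IsLevyKernel.bdd_mul {K q : E → ℝ} {μ : Measure E} {C : ℝ} (hK : IsLevyKernel K μ)
    (hq : Measurable q) (hqC : ∀ h, ‖q h‖ ≤ C) : IsLevyKernel (fun h => q h * K h) μ where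
  measurable := hq.mul hK.measurable
  integrable := by
    simpa only [mul_left_comm] using
      hK.integrable.bdd_mul hq.aestronglyMeasurable (.of_forall hqC)

lemma IsLevyKernel.add {K K' : E → ℝ} {μ : Measure E} (hK : IsLevyKernel K μ)
    (hK' : IsLevyKernel K' μ) : IsLevyKernel (fun h => K h + K' h) μ where
  measurable := hK.measurable.add hK'.measurable
  integrable := by simpa only [mul_add] using! hK.integrable.add hK'.integrable

/-- The integrand of the Gagliardo form `gagliardoForm`. -/
def gagliardoIntegrand (K φ ψ : E → ℝ) (p : E × E) : ℝ :=
  (φ p.1 - φ p.2) * (ψ p.1 - ψ p.2) * K (p.1 - p.2)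

/-- The Gagliardo form of `φ` and `ψ`, the bilinear form associated with the kernel `K`. -/
def gagliardoForm (μ : Measure E) (K φ ψ : E → ℝ) : ℝ :=
  ∫ p, gagliardoIntegrand K φ ψ p ∂μ.prod μ

/-- The nonlocal operator with kernel `K`, written with second differences so that the integral
converges for a Lévy kernel. -/
def levyOperator (μ : Measure E) (K u : E → ℝ) (x : E) : ℝ :=
  ∫ h, (2 * u x - u (x + h) - u (x - h)) * K h ∂μ

lemma gagliardoForm_comm (μ : Measure E) (K φ ψ : E → ℝ) :
    gagliardoForm μ K φ ψ = gagliardoForm μ K ψ φ := by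
  simp only [gagliardoForm, gagliardoIntegrand, mul_comm]

variable [BorelSpace E] {μ : Measure E} [μ.IsAddLeftInvariant]

lemma integral_sub_mul_sub_translate [IsFiniteMeasureOnCompacts μ] {φ ψ : E → ℝ}
    (hφ : Continuous φ) (hφc : HasCompactSupport φ) (hψ : Continuous ψ) (h : E) :
    ∫ z, (φ (h + z) - φ z) * (ψ (h + z) - ψ z) ∂μ =
      ∫ z, φ z * (2 * ψ z - ψ (z + h) - ψ (z - h)) ∂μ := by
  have hfwd : Integrable (fun z => φ z * (ψ z - ψ (z + h))) μ :=
    Continuous.integrable_of_hasCompactSupport (by fun_prop) hφc.mul_right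
  have hbwd : Integrable (fun z => φ z * (ψ z - ψ (z - h))) μ :=
    Continuous.integrable_of_hasCompactSupport (by fun_prop) hφc.mul_right
  have hbwd_shift := hbwd.comp_add_left h
  have htranslate := integral_add_left_eq_self (μ := μ) (fun z => φ z * (ψ z - ψ (z - h))) h
  simp only [add_sub_cancel_left] at hbwd_shift htranslate
  calc ∫ z, (φ (h + z) - φ z) * (ψ (h + z) - ψ z) ∂μ
      = ∫ z, (φ (h + z) * (ψ (h + z) - ψ z) + φ z * (ψ z - ψ (z + h))) ∂μ := by
        congr with z
        rw [add_comm z h]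
        ring
    _ = ∫ z, (φ z * (ψ z - ψ (z - h)) + φ z * (ψ z - ψ (z + h))) ∂μ := by
        rw [integral_add hbwd_shift hfwd, htranslate, integral_add hbwd hfwd]
    _ = ∫ z, φ z * (2 * ψ z - ψ (z + h) - ψ (z - h)) ∂μ := by
        congr with z
        ring

lemma integrable_add_mul_comp_sub [SecondCountableTopology E] [SFinite μ] [μ.IsNegInvariant]
    {g k : E → ℝ} (hg : Integrable g μ) (hk : Integrable k μ) :
    Integrable (fun p : E × E => (g p.1 + g p.2) * k (p.1 - p.2)) (μ.prod μ) := by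
  have hsnd := hg.convolution_integrand (ContinuousLinearMap.mul ℝ ℝ) hk
  have hfst := (hg.convolution_integrand (ContinuousLinearMap.mul ℝ ℝ) hk.comp_neg).swap
  simpa [Function.comp_def, add_mul] using! hfst.add hsnd

end LevyKernel

section GagliardoForm

variable {E : Type*} [NormedAddCommGroup E] [NormedSpace ℝ E] [FiniteDimensional ℝ E]
  [MeasurableSpace E] [BorelSpace E] {μ : Measure E} [μ.IsAddHaarMeasure] {K φ ψ : E → ℝ}

/-- The integrand vanishes unless `y` or `z` lies in the support of `φ`. -/
lemma integrable_gagliardoIntegrand (hK : IsLevyKernel K μ)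
    (hφ : ContDiff ℝ 1 φ) (hφc : HasCompactSupport φ)
    (hψ : ContDiff ℝ 1 ψ) (hψc : HasCompactSupport ψ) :
    Integrable (gagliardoIntegrand K φ ψ) (μ.prod μ) := by
  obtain ⟨C, hC0, hC⟩ := exists_norm_sub_le_mul_min hφ hφc
  obtain ⟨D, -, hD⟩ := exists_norm_sub_le_mul_min hψ hψc
  let χ : E → ℝ := (tsupport φ).indicator 1
  have hχ0 (x) : 0 ≤ χ x := Set.indicator_nonneg (fun _ _ => zero_le_one) x
  have hχ : Integrable χ μ := (integrable_indicator_iff (isClosed_tsupport φ).measurableSet).2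
    (integrableOn_const hφc.isCompact.measure_lt_top.ne)
  have hCχ (y z) : ‖φ y - φ z‖ ≤ (χ y + χ z) * (C * min ‖y - z‖ 1) := by
    by_cases hyz : y ∈ tsupport φ ∨ z ∈ tsupport φ
    · refine (hC y z).trans (le_mul_of_one_le_left (by positivity) ?_)
      rcases hyz with hy | hz
      · simpa [χ, hy] using hχ0 z
      · simpa [χ, hz] using hχ0 y
    · obtain ⟨hy, hz⟩ := not_or.1 hyz
      simp [χ, hy, hz, image_eq_zero_of_notMem_tsupport]
  refine ((integrable_add_mul_comp_sub hχ hK.integrable.norm).const_mul (C * D)).mono' ?_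
    (.of_forall fun ⟨y, z⟩ => ?_)
  · have := hφ.continuous
    have := hψ.continuous
    have := hK.measurable
    exact Measurable.aestronglyMeasurable (by unfold gagliardoIntegrand; fun_prop)
  · have hm0 : 0 ≤ min ‖y - z‖ 1 := by positivity
    calc ‖gagliardoIntegrand K φ ψ (y, z)‖
        = ‖φ y - φ z‖ * ‖ψ y - ψ z‖ * ‖K (y - z)‖ := by simp only [gagliardoIntegrand, norm_mul]
      _ ≤ (χ y + χ z) * (C * min ‖y - z‖ 1) * (D * min ‖y - z‖ 1) * ‖K (y - z)‖ := by
          gcongr ?_ * ?_ * _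
          · exact (norm_nonneg _).trans (hCχ y z)
          · exact hCχ y z
          · exact hD y z
      _ = C * D * ((χ y + χ z) * ‖min ‖y - z‖ 1 ^ 2 * K (y - z)‖) := by
          rw [norm_mul, norm_pow, Real.norm_of_nonneg hm0]
          ring

lemma integrable_mul_secondDiff_mul_kernel (hK : IsLevyKernel K μ)
    (hφ : Continuous φ) (hφc : HasCompactSupport φ)
    (hψ : ContDiff ℝ 2 ψ) (hψc : HasCompactSupport ψ) :
    Integrable (fun p : E × E => φ p.2 * ((2 * ψ p.2 - ψ (p.2 + p.1) - ψ (p.2 - p.1)) * K p.1))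
      (μ.prod μ) := by
  obtain ⟨C, -, hC⟩ := exists_norm_secondDiff_le_mul_min_sq hψ hψc
  have hφi : Integrable φ μ := hφ.integrable_of_hasCompactSupport hφc
  have hψcont := hψ.continuous
  have hKm := hK.measurable
  refine ((hK.integrable.norm.mul_prod hφi.norm).const_mul C).mono'
    (Measurable.aestronglyMeasurable (by fun_prop)) (.of_forall fun ⟨h, z⟩ => ?_)
  have hm0 : 0 ≤ min ‖h‖ 1 := by positivity
  calc ‖φ z * ((2 * ψ z - ψ (z + h) - ψ (z - h)) * K h)‖
      = ‖φ z‖ * (‖2 * ψ z - ψ (z + h) - ψ (z - h)‖ * ‖K h‖) := by simp only [norm_mul]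
    _ ≤ ‖φ z‖ * (C * min ‖h‖ 1 ^ 2 * ‖K h‖) := by gcongr; exact hC z h
    _ = C * (‖min ‖h‖ 1 ^ 2 * K h‖ * ‖φ z‖) := by
        rw [norm_mul, norm_pow, Real.norm_of_nonneg hm0]
        ring

theorem gagliardoForm_eq_integral_mul_levyOperator (hK : IsLevyKernel K μ)
    (hφ : ContDiff ℝ 1 φ) (hφc : HasCompactSupport φ)
    (hψ : ContDiff ℝ 2 ψ) (hψc : HasCompactSupport ψ) :
    gagliardoForm μ K φ ψ = ∫ z, φ z * levyOperator μ K ψ z ∂μ := by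
  have hint := integrable_gagliardoIntegrand hK hφ hφc (hψ.of_le one_le_two) hψc
  have hshear := measurePreserving_add_prod μ μ
  calc gagliardoForm μ K φ ψ
      = ∫ p : E × E, gagliardoIntegrand K φ ψ (p.1 + p.2, p.2) ∂μ.prod μ := by
        rw [gagliardoForm, ← integral_map hshear.aemeasurable, hshear.map_eq]
        rw [hshear.map_eq]
        exact hint.aestronglyMeasurable
    _ = ∫ h, ∫ z, (φ (h + z) - φ z) * (ψ (h + z) - ψ z) * K h ∂μ ∂μ := by
        refine (integral_prod _ (hshear.integrable_comp_of_integrable hint)).trans ?_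
        simp only [Function.comp_apply, gagliardoIntegrand, add_sub_cancel_right]
    _ = ∫ h, ∫ z, φ z * ((2 * ψ z - ψ (z + h) - ψ (z - h)) * K h) ∂μ ∂μ := by
        simp only [integral_mul_const, ← mul_assoc,
          integral_sub_mul_sub_translate hφ.continuous hφc hψ.continuous]
    _ = ∫ z, φ z * levyOperator μ K ψ z ∂μ := by
        rw [integral_integral_swap
          (integrable_mul_secondDiff_mul_kernel hK hφ.continuous hφc hψ hψc)]
        simp only [integral_const_mul, levyOperator]

end GagliardoForm

section FlowVariation

variable {E : Type*} [NormedAddCommGroup E] [NormedSpace ℝ E] {K w v : E → ℝ}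

/-- The first variation of the kernel `K` of the Gagliardo form under the flow `exp (t • L)` acting
on both variables; the second summand comes from the Jacobian determinant `exp (2 * t * tr L)` of
that action. -/
def flowVariation (L : E →L[ℝ] E) (K : E → ℝ) (h : E) : ℝ :=
  flowDeriv L K h + 2 * LinearMap.trace ℝ E L * K h

variable {L : E →L[ℝ] E}

lemma hasDerivAt_gagliardoIntegrand_flow [CompleteSpace E] (hw : Differentiable ℝ w)
    (hv : Differentiable ℝ v) (hK : ∀ h, h ≠ 0 → DifferentiableAt ℝ K h) (p : E × E) :
    HasDerivAt (fun t : ℝ => gagliardoIntegrand K w v (NormedSpace.exp (t • L.prodMap L) p))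
      (gagliardoIntegrand (flowDeriv L K) w v p + gagliardoIntegrand K (flowDeriv L w) v p +
        gagliardoIntegrand K w (flowDeriv L v) p) 0 := by
  obtain ⟨y, z⟩ := p
  have hflow (t : ℝ) : NormedSpace.exp (t • L.prodMap L) (y, z) =
      (NormedSpace.exp (t • L) y, NormedSpace.exp (t • L) z) := by
    rw [show t • L.prodMap L = (t • L).prodMap (t • L) from rfl, exp_prodMap]
    rfl
  simp only [hflow, gagliardoIntegrand]
  rcases eq_or_ne y z with rfl | hyz
  · simpa using hasDerivAt_const (0 : ℝ) (0 : ℝ)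
  · have hdw := (hasDerivAt_comp_exp_smul_zero (L := L) (hw y)).sub
      (hasDerivAt_comp_exp_smul_zero (L := L) (hw z))
    have hdv := (hasDerivAt_comp_exp_smul_zero (L := L) (hv y)).sub
      (hasDerivAt_comp_exp_smul_zero (L := L) (hv z))
    have hdK := hasDerivAt_comp_exp_smul_zero (L := L) (hK (y - z) (sub_ne_zero.2 hyz))
    simp only [map_sub] at hdK
    refine ((hdw.mul hdv).mul hdK).congr_deriv ?_
    simp only [Pi.mul_apply, Pi.sub_apply, zero_smul, NormedSpace.exp_zero,
      one_apply_eq_self]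
    ring

variable [MeasurableSpace E] {μ : Measure E}

lemma isLevyKernel_flowVariation (hK : IsLevyKernel K μ) (hLK : IsLevyKernel (flowDeriv L K) μ) :
    IsLevyKernel (flowVariation L K) μ :=
  hLK.add (hK.bdd_mul measurable_const fun _ => le_rfl)

variable [FiniteDimensional ℝ E] [BorelSpace E] [μ.IsAddHaarMeasure]

theorem gagliardoForm_flowVariation (hK : IsLevyKernel K μ) (hLK : IsLevyKernel (flowDeriv L K) μ)
    (hKdiff : ∀ h, h ≠ 0 → DifferentiableAt ℝ K h) (hw : ContDiff ℝ 2 w)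
    (hwc : HasCompactSupport w) (hv : ContDiff ℝ 2 v) (hvc : HasCompactSupport v) :
    gagliardoForm μ (flowVariation L K) w v =
      -gagliardoForm μ K (flowDeriv L w) v - gagliardoForm μ K w (flowDeriv L v) := by
  have hw1 := hw.of_le one_le_two
  have hv1 := hv.of_le one_le_two
  have hLw : ContDiff ℝ 1 (flowDeriv L w) := contDiff_flowDeriv hw (by norm_num)
  have hLv : ContDiff ℝ 1 (flowDeriv L v) := contDiff_flowDeriv hv (by norm_num)
  have hI := integrable_gagliardoIntegrand hK hw1 hwc hv1 hvc
  have hIK := integrable_gagliardoIntegrand hLK hw1 hwc hv1 hvc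
  have hIw := integrable_gagliardoIntegrand hK hLw (hasCompactSupport_flowDeriv hwc) hv1 hvc
  have hIv := integrable_gagliardoIntegrand hK hw1 hwc hLv (hasCompactSupport_flowDeriv hvc)
  have hsplit : gagliardoForm μ (flowVariation L K) w v = gagliardoForm μ (flowDeriv L K) w v +
      2 * LinearMap.trace ℝ E L * gagliardoForm μ K w v := by
    simp only [gagliardoForm]
    rw [← integral_const_mul, ← integral_add hIK (hI.const_mul _)]
    congr with p
    simp only [gagliardoIntegrand, flowVariation]
    ring
  have : (μ.prod μ).IsAddHaarMeasure := Measure.prod.instIsAddHaarMeasure μ μ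
  have htrace : LinearMap.trace ℝ (E × E) (L.prodMap L) = 2 * LinearMap.trace ℝ E L :=
    (LinearMap.trace_prodMap' L.toLinearMap L.toLinearMap).trans (two_mul _).symm
  have hflow : gagliardoForm μ (flowDeriv L K) w v + gagliardoForm μ K (flowDeriv L w) v +
      gagliardoForm μ K w (flowDeriv L v) =
        -(2 * LinearMap.trace ℝ E L * gagliardoForm μ K w v) :=
    calc _ = ∫ p, (gagliardoIntegrand (flowDeriv L K) w v p +
          gagliardoIntegrand K (flowDeriv L w) v p +
          gagliardoIntegrand K w (flowDeriv L v) p) ∂μ.prod μ :=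
          ((integral_add (hIK.add hIw) hIv).trans (congrArg (· + _) (integral_add hIK hIw))).symm
      _ = -(LinearMap.trace ℝ (E × E) (L.prodMap L) • gagliardoForm μ K w v) :=
          integral_flow_deriv hI ((hIK.add hIw).add hIv) (hasDerivAt_gagliardoIntegrand_flow
            (hw1.differentiable one_ne_zero) (hv1.differentiable one_ne_zero) hKdiff)
      _ = _ := by rw [htrace, smul_eq_mul]
  linarith

theorem gagliardoForm_flowVariation_eq_levyOperator (hK : IsLevyKernel K μ)
    (hLK : IsLevyKernel (flowDeriv L K) μ) (hKdiff : ∀ h, h ≠ 0 → DifferentiableAt ℝ K h)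
    (hw : ContDiff ℝ 2 w) (hwc : HasCompactSupport w)
    (hv : ContDiff ℝ 2 v) (hvc : HasCompactSupport v) :
    gagliardoForm μ (flowVariation L K) w v =
      -(∫ z, flowDeriv L w z * levyOperator μ K v z ∂μ) -
        ∫ z, flowDeriv L v z * levyOperator μ K w z ∂μ := by
  have hLw : ContDiff ℝ 1 (flowDeriv L w) := contDiff_flowDeriv hw (by norm_num)
  have hLv : ContDiff ℝ 1 (flowDeriv L v) := contDiff_flowDeriv hv (by norm_num)
  rw [gagliardoForm_flowVariation hK hLK hKdiff hw hwc hv hvc, gagliardoForm_comm μ K w,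
    gagliardoForm_eq_integral_mul_levyOperator hK hLw (hasCompactSupport_flowDeriv hwc) hv hvc,
    gagliardoForm_eq_integral_mul_levyOperator hK hLv (hasCompactSupport_flowDeriv hvc) hw hwc]

end FlowVariation

section PowerKernel

lemma isLevyKernel_norm_rpow {E : Type*} [NormedAddCommGroup E] [NormedSpace ℝ E]
    [FiniteDimensional ℝ E] [Nontrivial E] [MeasurableSpace E] [BorelSpace E] {μ : Measure E}
    [μ.IsAddHaarMeasure] {α : ℝ} (hα : -(Module.finrank ℝ E + 2 : ℝ) < α)
    (hα' : α < -(Module.finrank ℝ E : ℝ)) : IsLevyKernel (fun h : E => ‖h‖ ^ α) μ where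
  measurable := by fun_prop
  integrable := by
    set d := Module.finrank ℝ E
    have hd : 1 ≤ d := Module.finrank_pos
    refine (integrable_fun_norm_addHaar μ (f := fun r : ℝ => min r 1 ^ 2 * r ^ α)).2 ?_
    have hjac {r : ℝ} (hr : 0 < r) : r ^ (d - 1) * r ^ α = r ^ (α + d - 1) := by
      rw [← Real.rpow_natCast, ← Real.rpow_add hr, Nat.cast_sub hd, Nat.cast_one]
      ring_nf
    have hnear : IntegrableOn (fun r : ℝ => r ^ (α + d + 1)) (Set.Ioc 0 1) :=
      (intervalIntegrable_iff_integrableOn_Ioc_of_le zero_le_one).1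
        (intervalIntegral.intervalIntegrable_rpow' (by linarith))
    have hfar : IntegrableOn (fun r : ℝ => r ^ (α + d - 1)) (Set.Ioi 1) :=
      integrableOn_Ioi_rpow_of_lt (by linarith) one_pos
    rw [← Set.Ioc_union_Ioi_eq_Ioi (zero_le_one' ℝ)]
    refine (hnear.congr_fun (fun r ⟨hr0, hr1⟩ => ?_) measurableSet_Ioc).union
      (hfar.congr_fun (fun r (hr : 1 < r) => ?_) measurableSet_Ioi)
    · simp only [smul_eq_mul, min_eq_left hr1]
      rw [mul_left_comm, hjac hr0, ← Real.rpow_natCast, ← Real.rpow_add hr0]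
      push_cast
      ring_nf
    · simp only [smul_eq_mul, min_eq_right hr.le]
      rw [mul_left_comm, hjac (one_pos.trans hr), one_pow, one_mul]

variable {E : Type*} [NormedAddCommGroup E] [InnerProductSpace ℝ E] {α : ℝ} {L : E →L[ℝ] E}

lemma hasFDerivAt_norm_rpow_of_ne_zero {h : E} (hh : h ≠ 0) :
    HasFDerivAt (fun x : E => ‖x‖ ^ α) ((α * ‖h‖ ^ (α - 2)) • innerSL ℝ h) h := by
  have hsq (x : E) (β : ℝ) : (‖x‖ ^ 2) ^ β = ‖x‖ ^ (2 * β) := by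
    rw [← Real.rpow_natCast, ← Real.rpow_mul (norm_nonneg x), Nat.cast_two]
  have hpow := (hasStrictFDerivAt_norm_sq h).hasFDerivAt.rpow_const (p := α / 2)
    (.inl (by positivity))
  simp only [hsq] at hpow
  convert hpow using 1
  · ring_nf
  · rw [← Nat.cast_smul_eq_nsmul ℝ, smul_smul]
    congr 1
    push_cast
    ring_nf

/-- At `h = 0` both sides vanish: on the left because `L 0 = 0`, on the right by the convention
`x / 0 = 0`. -/
lemma flowDeriv_norm_rpow (h : E) :
    flowDeriv L (fun x => ‖x‖ ^ α) h = α * ⟪L h, h⟫ / ‖h‖ ^ 2 * ‖h‖ ^ α := by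
  rcases eq_or_ne h 0 with rfl | hh
  · simp [flowDeriv]
  · have hpos : 0 < ‖h‖ := norm_pos_iff.2 hh
    rw [flowDeriv, (hasFDerivAt_norm_rpow_of_ne_zero hh).fderiv, Real.rpow_sub hpos,
      Real.rpow_two, smul_apply, innerSL_apply_apply, smul_eq_mul,
      real_inner_comm]
    ring

lemma norm_inner_apply_div_norm_sq_le (L : E →L[ℝ] E) (h : E) : ‖⟪L h, h⟫ / ‖h‖ ^ 2‖ ≤ ‖L‖ := by
  rw [norm_div, norm_pow, norm_norm]
  refine div_le_of_le_mul₀ (by positivity) (by positivity) ?_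
  calc ‖⟪L h, h⟫‖ ≤ ‖L h‖ * ‖h‖ := norm_inner_le_norm _ _
    _ ≤ ‖L‖ * ‖h‖ * ‖h‖ := by gcongr; exact L.le_opNorm h
    _ = ‖L‖ * ‖h‖ ^ 2 := by ring

lemma isLevyKernel_flowDeriv_norm_rpow [FiniteDimensional ℝ E] [MeasurableSpace E] [BorelSpace E]
    {μ : Measure E} (hK : IsLevyKernel (fun h : E => ‖h‖ ^ α) μ) :
    IsLevyKernel (flowDeriv L fun h => ‖h‖ ^ α) μ := by
  rw [funext (flowDeriv_norm_rpow (L := L) (α := α))]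
  refine hK.bdd_mul (by fun_prop) (C := |α| * ‖L‖) fun h => ?_
  rw [mul_div_assoc, norm_mul, Real.norm_eq_abs]
  gcongr
  exact norm_inner_apply_div_norm_sq_le L h

end PowerKernel

lemma trace_toEuclideanLin {n : Type*} [Fintype n] [DecidableEq n] (A : Matrix n n ℝ) :
    LinearMap.trace ℝ _ (Matrix.toEuclideanLin A) = A.trace := by
  rw [show Matrix.toEuclideanLin A = Matrix.toLin (PiLp.basisFun 2 ℝ n) (PiLp.basisFun 2 ℝ n) A from
    DFunLike.congr_fun (Matrix.toLpLin_eq_toLin 2 2) A, Matrix.trace_toLin_eq]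

section FractionalLaplacian

variable {N : ℕ} {s : ℝ} {A : Matrix (Fin N) (Fin N) ℝ} {u w v : EuclideanSpace ℝ (Fin N) → ℝ}

/-- The kernel `|h|^{-N-2s}` of the fractional Laplacian of order `2s` on `ℝ^N`, up to the
normalizing constant `c_{N,s}`. -/
def fracKernel (N : ℕ) (s : ℝ) (h : EuclideanSpace ℝ (Fin N)) : ℝ :=
  ‖h‖ ^ (-(N : ℝ) - 2 * s)

lemma isLevyKernel_fracKernel (hN : 1 ≤ N) (hs : s ∈ Set.Ioo (0 : ℝ) 1) :
    IsLevyKernel (fracKernel N s) volume := by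
  have : Nontrivial (EuclideanSpace ℝ (Fin N)) :=
    Module.nontrivial_of_finrank_pos (R := ℝ) (by rwa [finrank_euclideanSpace_fin])
  apply isLevyKernel_norm_rpow <;> rw [finrank_euclideanSpace_fin] <;> linarith [hs.1, hs.2]

lemma differentiableAt_fracKernel {h : EuclideanSpace ℝ (Fin N)} (hh : h ≠ 0) :
    DifferentiableAt ℝ (fracKernel N s) h :=
  (hasFDerivAt_norm_rpow_of_ne_zero hh).differentiableAt

lemma fracLap_eq_mul_levyOperator (x : EuclideanSpace ℝ (Fin N)) :
    fracLap N s u x = cNs N s / 2 * levyOperator volume (fracKernel N s) u x :=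
  rfl

lemma inner_gradient_toEuclideanLin (z : EuclideanSpace ℝ (Fin N)) :
    ⟪gradient u z, Matrix.toEuclideanLin A z⟫ = flowDeriv (Matrix.toEuclideanCLM (𝕜 := ℝ) A) u z :=
  inner_gradient_left

lemma fracKernel_mul_omegaA (y z : EuclideanSpace ℝ (Fin N)) :
    fracKernel N s (y - z) * omegaA N s A y z =
      cNs N s / 2 *
        flowVariation (Matrix.toEuclideanCLM (𝕜 := ℝ) A) (fracKernel N s) (y - z) := by
  have hderiv : flowDeriv (Matrix.toEuclideanCLM (𝕜 := ℝ) A) (fracKernel N s) (y - z) =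
      (-(N : ℝ) - 2 * s) * ⟪Matrix.toEuclideanLin A (y - z), y - z⟫ / ‖y - z‖ ^ 2 *
        fracKernel N s (y - z) :=
    flowDeriv_norm_rpow _
  have htrace : LinearMap.trace ℝ _ (Matrix.toEuclideanCLM (𝕜 := ℝ) A).toLinearMap = A.trace :=
    trace_toEuclideanLin A
  rw [flowVariation, hderiv, htrace, omegaA]
  ring

theorem statement10_general (hN : 1 ≤ N) (hs : s ∈ Set.Ioo (0 : ℝ) 1)
    (hw : ContDiff ℝ 2 w) (hwc : HasCompactSupport w)
    (hv : ContDiff ℝ 2 v) (hvc : HasCompactSupport v) :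
    Integrable (fun p : EuclideanSpace ℝ (Fin N) × EuclideanSpace ℝ (Fin N) =>
      (w p.1 - w p.2) * (v p.1 - v p.2) * ‖p.1 - p.2‖ ^ (-(N : ℝ) - 2 * s) *
        omegaA N s A p.1 p.2) ∧
    (∫ p : EuclideanSpace ℝ (Fin N) × EuclideanSpace ℝ (Fin N),
      (w p.1 - w p.2) * (v p.1 - v p.2) * ‖p.1 - p.2‖ ^ (-(N : ℝ) - 2 * s) *
        omegaA N s A p.1 p.2) =
      - (∫ z : EuclideanSpace ℝ (Fin N),
          ⟪gradient w z, Matrix.toEuclideanLin A z⟫ * fracLap N s v z)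
      - (∫ z : EuclideanSpace ℝ (Fin N),
          ⟪gradient v z, Matrix.toEuclideanLin A z⟫ * fracLap N s w z) := by
  have hK := isLevyKernel_fracKernel hN hs
  have hLK : IsLevyKernel (flowDeriv (Matrix.toEuclideanCLM (𝕜 := ℝ) A) (fracKernel N s)) volume :=
    isLevyKernel_flowDeriv_norm_rpow hK
  have hint := integrable_gagliardoIntegrand (isLevyKernel_flowVariation hK hLK)
    (hw.of_le one_le_two) hwc (hv.of_le one_le_two) hvc
  have hform := gagliardoForm_flowVariation_eq_levyOperator hK hLK
    (fun _ => differentiableAt_fracKernel) hw hwc hv hvc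
  have hω (p : EuclideanSpace ℝ (Fin N) × EuclideanSpace ℝ (Fin N)) :
      (w p.1 - w p.2) * (v p.1 - v p.2) * ‖p.1 - p.2‖ ^ (-(N : ℝ) - 2 * s) *
        omegaA N s A p.1 p.2 = cNs N s / 2 * gagliardoIntegrand
          (flowVariation (Matrix.toEuclideanCLM (𝕜 := ℝ) A) (fracKernel N s)) w v p := by
    rw [gagliardoIntegrand, mul_left_comm, ← fracKernel_mul_omegaA, ← mul_assoc, fracKernel]
  simp only [hω, inner_gradient_toEuclideanLin, fracLap_eq_mul_levyOperator,
    mul_left_comm _ (cNs N s / 2), integral_const_mul]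
  refine ⟨hint.const_mul _, ?_⟩
  rw [Measure.volume_eq_prod, ← gagliardoForm, hform]
  ring

end FractionalLaplacian

/-- Integration-by-parts identity for the kernel `ω_A`:
`∬ (w(y)-w(z))(v(y)-v(z)) |y-z|^{-N-2s} ω_A(y,z) dy dz
  = -∫ (∇w·Az)(-Δ)^s v - ∫ (∇v·Az)(-Δ)^s w`. -/
theorem statement10 (N : ℕ) (hN : 1 ≤ N) (s : ℝ) (hs : s ∈ Set.Ioo (0 : ℝ) 1)
    (A : Matrix (Fin N) (Fin N) ℝ)
    (w v : EuclideanSpace ℝ (Fin N) → ℝ)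
    (hw : ContDiff ℝ (⊤ : ℕ∞) w) (hwc : HasCompactSupport w)
    (hv : ContDiff ℝ (⊤ : ℕ∞) v) (hvc : HasCompactSupport v) :
    Integrable (fun p : EuclideanSpace ℝ (Fin N) × EuclideanSpace ℝ (Fin N) =>
      (w p.1 - w p.2) * (v p.1 - v p.2) * ‖p.1 - p.2‖ ^ (-(N : ℝ) - 2 * s) *
        omegaA N s A p.1 p.2) ∧
    (∫ p : EuclideanSpace ℝ (Fin N) × EuclideanSpace ℝ (Fin N),
      (w p.1 - w p.2) * (v p.1 - v p.2) * ‖p.1 - p.2‖ ^ (-(N : ℝ) - 2 * s) *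
        omegaA N s A p.1 p.2) =
      - (∫ z : EuclideanSpace ℝ (Fin N),
          ⟪gradient w z, Matrix.toEuclideanLin A z⟫ * fracLap N s v z)
      - (∫ z : EuclideanSpace ℝ (Fin N),
          ⟪gradient v z, Matrix.toEuclideanLin A z⟫ * fracLap N s w z) := by
  have htwo : (2 : WithTop ℕ∞) ≤ ((⊤ : ℕ∞) : WithTop ℕ∞) := WithTop.coe_le_coe.2 le_top
  exact statement10_general hN hs (hw.of_le htwo) hwc (hv.of_le htwo) hvc
end
end
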